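/- arXiv:2003.06338 — 4 statements merged into one kernel-verified Lean document; each statement's English description precedes it below -/
import Mathlib

section
/- For every sequence (ξ_k) of pairwise distinct irrational numbers and every sequence (c_k) of positive real numbers, there exists a bijection φ : ℕ → ℚ such that for every k, the function G_φ(x) = Σ_{n : φ(n) < x} n^(-2) is differentiable at ξ_k with G_φ'(ξ_k) = c_k. -/
noncomputable def Gphi (φ : ℕ+ → ℚ) (x : ℝ) : ℝ :=
  ∑' n : ℕ+, if (φ n : ℝ) < x then 1 / ((n : ℕ) : ℝ) ^ 2 else 0

/-!
Split the indices into infinitely many classes: one for each side of each `ξ k`, and free ones. Each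
class is invariant under a translation, so a single weight `n⁻²` is negligible against the total
weight of the later members of its class. If the indices of the class of one side of `ξ k` are
placed at rationals `q` such that `c k * |q - ξ k|` matches the total weight of the members from `n`
on, this class alone contributes one-sided derivative `c k`. All other indices are kept at distance
at least `n ^ (-1/2)` from `ξ k`, with finitely many exceptions. As `∑ n⁻² / n ^ (-1/2) < ∞`, their
contribution within distance `h` of `ξ k` is `o(h)`.

Every index has infinitely many admissible rationals, and every rational is admissible for
infinitely many free indices. This gives injections in both directions that respect admissibility,
and the Schröder–Bernstein construction combines them into a bijection that does as well.
-/

open Asymptotics Filter Set Topology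

section Density

variable {ι : Type*} {w w₁ w₂ r u : ι → ℝ} {c c₁ c₂ : ℝ}

theorem tsum_subtype_le_tsum_subtype (hw : 0 ≤ w) (hs : Summable w) {A B : Set ι}
    (hAB : ∀ n ∈ A, w n ≠ 0 → n ∈ B) : ∑' n : A, w n ≤ ∑' n : B, w n := by
  rw [tsum_subtype, tsum_subtype]
  refine (hs.indicator A).tsum_le_tsum (fun n => ?_) (hs.indicator B)
  refine indicator_le' (fun m hm => ?_) (fun m _ => indicator_nonneg (fun k _ => hw k) m) n
  by_cases h : w m = 0
  · exact h.trans_le (indicator_nonneg (fun k _ => hw k) m)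
  · rw [indicator_of_mem (hAB m hm h)]

theorem eventually_forall_mem_Ioc_of_cofinite {p : ι → Prop} (hp : ∀ᶠ n in cofinite, p n)
    (u : ι → ℝ) : ∀ᶠ h in 𝓝[>] 0, ∀ n, u n ∈ Ioc 0 h → p n := by
  have hfar : ∀ᶠ h in 𝓝[>] 0, ∀ n ∈ {n | ¬p n}, u n ∉ Ioc 0 h := by
    refine (eventually_all_finite hp).2 fun n _ => ?_
    rcases le_or_gt (u n) 0 with hn | hn
    · exact .of_forall fun h hu => hu.1.not_ge hn
    · filter_upwards [nhdsWithin_le_nhds (Iio_mem_nhds hn)] with h hh hu using hu.2.not_gt hh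
  filter_upwards [hfar] with h hh n hn
  exact by_contra fun hpn => hh n hpn hn

/-- The weights `w`, placed at the points `u`, have density `c` immediately to the right of `0`:
the total weight in an interval from `0` to `h` is `c * h + o(h)` as `h → 0⁺`. The set `S h` is
only required to lie between the open and the half-closed interval, because the increments of a
sum over `{n | φ n < x}` include the endpoint on one side of the base point only. -/
def HasRightDensity (w u : ι → ℝ) (c : ℝ) : Prop :=
  ∀ S : ℝ → Set ι, (∀ h, u ⁻¹' Ioo 0 h ⊆ S h) → (∀ h, S h ⊆ u ⁻¹' Ioc 0 h) →
    Tendsto (fun h => (∑' n : S h, w n) / h) (𝓝[>] 0) (𝓝 c)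

namespace HasRightDensity

theorem add (h₁ : HasRightDensity w₁ u c₁) (h₂ : HasRightDensity w₂ u c₂) (hs₁ : Summable w₁)
    (hs₂ : Summable w₂) : HasRightDensity (w₁ + w₂) u (c₁ + c₂) := by
  intro S hS hS'
  refine ((h₁ S hS hS').add (h₂ S hS hS')).congr fun h => ?_
  rw [← add_div]
  exact congrArg (· / h) ((hs₁.subtype _).tsum_add (hs₂.subtype _)).symm

theorem zero_of_le (hr : ∀ n, 0 < r n) (hs : Summable fun n => w n / r n)
    (hru : ∀ᶠ n in cofinite, w n ≠ 0 → 0 < u n → r n ≤ u n) : HasRightDensity w u 0 := by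
  intro S _ hS
  have hterm (n : ι) : Tendsto (fun h => (S h).indicator w n / h) (𝓝[>] 0) (𝓝 0) := by
    refine tendsto_const_nhds.congr' ?_
    filter_upwards [eventually_forall_mem_Ioc_of_cofinite (finite_singleton n).compl_mem_cofinite u]
      with h hh
    rw [indicator_of_notMem fun hn => hh n (hS h hn) rfl, zero_div]
  have hbound : ∀ᶠ h in 𝓝[>] 0, ∀ n, ‖(S h).indicator w n / h‖ ≤ |w n / r n| := by
    filter_upwards [eventually_forall_mem_Ioc_of_cofinite hru u] with h hh n
    by_cases hn : n ∈ S h ∧ w n ≠ 0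
    · obtain ⟨hu, huh⟩ := hS h hn.1
      have hrh : r n ≤ h := (hh n ⟨hu, huh⟩ hn.2 hu).trans huh
      rw [indicator_of_mem hn.1, Real.norm_eq_abs, abs_div, abs_div, abs_of_pos (hr n),
        abs_of_pos (hu.trans_le huh)]
      exact div_le_div_of_nonneg_left (abs_nonneg _) (hr n) hrh
    · have hzero : (S h).indicator w n = 0 := by
        rw [indicator_apply_eq_zero]
        exact fun hnS => by_contra fun hwn => hn ⟨hnS, hwn⟩
      rw [hzero, zero_div, norm_zero]
      exact abs_nonneg _
  simpa only [tsum_subtype, tsum_div_const, tsum_zero] using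
    tendsto_tsum_of_dominated_convergence hs.abs hterm hbound

end HasRightDensity

theorem tsum_preimage_Iio_sub (hs : Summable w) (f : ι → ℝ) {x y : ℝ} (hxy : x ≤ y) :
    ∑' n : f ⁻¹' Iio y, w n - ∑' n : f ⁻¹' Iio x, w n = ∑' n : f ⁻¹' Ico x y, w n := by
  have hdisj : Disjoint (f ⁻¹' Iio x) (f ⁻¹' Ico x y) :=
    (disjoint_left.2 fun _ h h' => h'.1.not_gt h).preimage f
  rw [← Iio_union_Ico_eq_Iio hxy, preimage_union,
    (hs.subtype _).tsum_union_disjoint hdisj (hs.subtype _), add_sub_cancel_left]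

theorem hasDerivAt_tsum_preimage_Iio (hs : Summable w) {f : ι → ℝ} {x : ℝ} (hx : ∀ n, f n ≠ x)
    (hf : ∀ σ : ℤˣ, HasRightDensity w (fun n => σ • (f n - x)) c) :
    HasDerivAt (fun y => ∑' n : f ⁻¹' Iio y, w n) c x := by
  rw [hasDerivAt_iff_tendsto_slope_zero, ← nhdsLT_sup_nhdsGT, tendsto_sup]
  constructor
  · have hleft := hf (-1) (fun h => f ⁻¹' Ico (x - h) x) (fun h n hn => ?_) (fun h n hn => ?_)
    · refine (hleft.comp (neg_zero (G := ℝ) ▸ tendsto_neg_nhdsLT)).congr' ?_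
      filter_upwards [self_mem_nhdsWithin] with h hh
      have hle : x + h ≤ x := by linarith [mem_Iio.1 hh]
      rw [Function.comp_apply, sub_neg_eq_add, ← tsum_preimage_Iio_sub hs f hle, smul_eq_mul]
      field
    · simp only [mem_preimage, Units.neg_smul, one_smul, mem_Ioo, mem_Ico] at hn ⊢
      constructor <;> linarith
    · simp only [mem_preimage, Units.neg_smul, one_smul, mem_Ioc, mem_Ico] at hn ⊢
      constructor <;> linarith
  · have hright := hf 1 (fun h => f ⁻¹' Ico x (x + h)) (fun h n hn => ?_) (fun h n hn => ?_)
    · refine hright.congr' ?_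
      filter_upwards [self_mem_nhdsWithin] with h hh
      have hle : x ≤ x + h := by linarith [mem_Ioi.1 hh]
      rw [← tsum_preimage_Iio_sub hs f hle, smul_eq_mul, div_eq_inv_mul]
    · simp only [mem_preimage, one_smul, mem_Ioo, mem_Ico] at hn ⊢
      constructor <;> linarith
    · simp only [mem_preimage, one_smul, mem_Ioc, mem_Ico] at hn ⊢
      have hlt : x < f n := hn.1.lt_of_ne (hx n).symm
      constructor <;> linarith

end Density

section Tail

variable {ι : Type*} [LinearOrder ι] {w u : ι → ℝ} {c : ℝ}

theorem tsum_Ici_eq_add_tsum_Ioi (hs : Summable w) (n : ι) :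
    ∑' m : Ici n, w m = w n + ∑' m : Ioi n, w m := by
  rw [← Ioi_insert, insert_eq,
    (hs.subtype _).tsum_union_disjoint (disjoint_singleton_left.2 self_notMem_Ioi) (hs.subtype _),
    tsum_singleton]

theorem abs_tsum_sub_le_of_mem_Ico (hw : 0 ≤ w) (hs : Summable w) {y : ι → ℝ} {s : ℝ} {p : ι}
    {S : Set ι} (hp : s ∈ Ico (∑' m : Ioi p, w m) (∑' m : Ici p, w m))
    (hy : ∀ m, p ≤ m ∨ m ∈ S → w m ≠ 0 → y m ∈ Ioo (∑' k : Ioi m, w k) (∑' k : Ici m, w k))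
    (hlower : y ⁻¹' Ioo 0 s ⊆ S) (hupper : S ⊆ y ⁻¹' Iic s) :
    |∑' m : S, w m - s| ≤ w p := by
  have hmem (m : ι) (hm : p < m) (hwm : w m ≠ 0) : m ∈ S := by
    obtain ⟨hlo, hhi⟩ := hy m (.inl hm.le) hwm
    have htails : ∑' k : Ici m, w k ≤ ∑' k : Ioi p, w k :=
      tsum_subtype_le_tsum_subtype hw hs fun k hk _ => hm.trans_le hk
    have hpos : 0 ≤ ∑' k : Ioi m, w k := tsum_nonneg fun k => hw k
    exact hlower ⟨hpos.trans_lt hlo, hhi.trans_le (htails.trans hp.1)⟩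
  have hge (m : ι) (hm : m ∈ S) (hwm : w m ≠ 0) : p ≤ m := by
    refine not_lt.1 fun hmp => ?_
    have htails : ∑' k : Ici p, w k ≤ ∑' k : Ioi m, w k :=
      tsum_subtype_le_tsum_subtype hw hs fun k hk _ => hmp.trans_le hk
    exact (hp.2.trans_le htails).not_ge ((hy m (.inr hm) hwm).1.le.trans (hupper hm))
  have h₁ : ∑' m : Ioi p, w m ≤ ∑' m : S, w m := tsum_subtype_le_tsum_subtype hw hs hmem
  have h₂ : ∑' m : S, w m ≤ ∑' m : Ici p, w m := tsum_subtype_le_tsum_subtype hw hs hge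
  have h₃ := tsum_Ici_eq_add_tsum_Ioi hs p
  exact abs_le.2 ⟨by linarith [hp.2], by linarith [hp.1]⟩

variable [LocallyFiniteOrderBot ι]

theorem tendsto_tsum_Ici_cofinite_zero (hs : Summable w) :
    Tendsto (fun n : ι => ∑' m : Ici n, w m) cofinite (𝓝 0) := by
  have hterm (m : ι) : Tendsto (fun n => (Ici n).indicator w m) cofinite (𝓝 0) := by
    refine tendsto_const_nhds.congr' ?_
    filter_upwards [(finite_Iic m).compl_mem_cofinite] with n hn
    exact (indicator_of_notMem (s := Ici n) hn w).symm
  simpa only [tsum_subtype, tsum_zero] using tendsto_tsum_of_dominated_convergence hs.abs hterm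
    (.of_forall fun n m => norm_indicator_le_norm_self w m)

theorem eventually_cofinite_forall_ge {p : ι → Prop} (hp : ∀ᶠ n in cofinite, p n) :
    ∀ᶠ n in cofinite, ∀ m ≥ n, p m := by
  have hfin : (⋃ m ∈ {m | ¬p m}, Iic m).Finite := hp.biUnion fun m _ => finite_Iic m
  filter_upwards [hfin.compl_mem_cofinite] with n hn m hm
  exact by_contra fun hpm => hn (mem_biUnion hpm hm)

variable [SuccOrder ι] [NoMaxOrder ι]

theorem exists_mem_Ico_tsum_Ioi_tsum_Ici (hs : Summable w) {s : ℝ} (hs₀ : 0 < s) {n : ι}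
    (hn : s < ∑' m : Ici n, w m) :
    ∃ p ≥ n, s ∈ Ico (∑' m : Ioi p, w m) (∑' m : Ici p, w m) := by
  have hfin : {k : ι | s < ∑' m : Ici k, w m}.Finite := by
    simpa only [eventually_cofinite, not_le] using
      (tendsto_tsum_Ici_cofinite_zero hs).eventually_le_const hs₀
  obtain ⟨p, hp, hmax⟩ := hfin.exists_maximalFor id _ ⟨n, hn⟩
  refine ⟨p, ?_, ?_, hp⟩
  · exact (le_total n p).elim id fun h => hmax hn h
  · rw [← Order.Ici_succ]
    exact not_lt.1 fun h => (Order.lt_succ p).not_ge (hmax h (Order.le_succ p))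

/-- Listing the indices in increasing order, the intervals between consecutive tails of `w` tile
`(0, h]` from right to left, so putting the weight `w n` in the `n`-th interval, which has length
`w n`, realises the density up to one weight, which is negligible. -/
theorem HasRightDensity.of_mem_Ioo_tsum (hw : 0 ≤ w) (hs : Summable w)
    (hsupp : w.support.Infinite) (hlittle : w =o[cofinite] fun n => ∑' m : Ioi n, w m)
    (hc : 0 < c)
    (hu : ∀ᶠ n in cofinite, w n ≠ 0 → c * u n ∈ Ioo (∑' m : Ioi n, w m) (∑' m : Ici n, w m)) :
    HasRightDensity w u c := by
  have tail_nonneg (n : ι) : 0 ≤ ∑' m : Ioi n, w m := tsum_nonneg fun m => hw m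
  intro S hS hS'
  refine Metric.tendsto_nhds.2 fun ε hε => ?_
  obtain ⟨n₀, hn₀, hge⟩ := ((frequently_cofinite_iff_infinite.2 hsupp).and_eventually
    (eventually_cofinite_forall_ge ((hlittle.def (half_pos (div_pos hε hc))).and hu))).exists
  have htail : 0 < ∑' m : Ici n₀, w m := by
    rw [tsum_Ici_eq_add_tsum_Ioi hs]
    exact add_pos_of_pos_of_nonneg ((hw n₀).lt_of_ne' hn₀) (tail_nonneg n₀)
  have hsmall : ∀ᶠ h in 𝓝[>] 0, c * h < ∑' m : Ici n₀, w m :=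
    nhdsWithin_le_nhds ((continuous_const_mul c).tendsto' 0 0 (mul_zero c)
      |>.eventually_lt_const htail)
  filter_upwards [hsmall, self_mem_nhdsWithin, eventually_forall_mem_Ioc_of_cofinite hu u]
    with h hh (hpos : 0 < h) hexc
  obtain ⟨p, hp, hps⟩ := exists_mem_Ico_tsum_Ioi_tsum_Ici hs (mul_pos hc hpos) hh
  have hwp : w p ≤ ε / c / 2 * (c * h) := by
    have h₁ := (hge p hp).1
    rw [Real.norm_of_nonneg (hw p), Real.norm_of_nonneg (tail_nonneg p)] at h₁
    exact h₁.trans (by gcongr; exact hps.1)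
  have hwindow (m : ι) (hm : p ≤ m ∨ m ∈ S h) (hwm : w m ≠ 0) :
      c * u m ∈ Ioo (∑' k : Ioi m, w k) (∑' k : Ici m, w k) :=
    hm.elim (fun hm => (hge m (hp.trans hm)).2 hwm) fun hm => hexc m (hS' h hm) hwm
  have hlower : (fun m => c * u m) ⁻¹' Ioo 0 (c * h) ⊆ S h := fun m hm =>
    hS h ⟨pos_of_mul_pos_right hm.1 hc.le, lt_of_mul_lt_mul_left hm.2 hc.le⟩
  have hupper : S h ⊆ (fun m => c * u m) ⁻¹' Iic (c * h) := fun m hm =>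
    mul_le_mul_of_nonneg_left (hS' h hm).2 hc.le
  have hdiff : |∑' m : S h, w m - c * h| ≤ ε / 2 * h :=
    (abs_tsum_sub_le_of_mem_Ico hw hs hps hwindow hlower hupper).trans
      (hwp.trans_eq (by field))
  rw [Real.dist_eq, div_sub' hpos.ne', mul_comm h, abs_div, abs_of_pos hpos, div_lt_iff₀ hpos]
  exact hdiff.trans_lt (by gcongr; exact half_lt_self hε)

end Tail

section Assignment

variable {ι β : Type*}

theorem exists_injective_forall_mem [Countable ι] {t : ι → Set β} (ht : ∀ i, (t i).Infinite) :
    ∃ f : ι → β, f.Injective ∧ ∀ i, f i ∈ t i := by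
  classical
  obtain ⟨e, he⟩ := exists_injective_nat ι
  choose s hst hcard using fun i => (ht i).exists_subset_card_eq (e i + 1)
  have hall (I : Finset ι) : I.card ≤ (I.biUnion s).card := by
    rcases I.eq_empty_or_nonempty with rfl | hI
    · simp
    obtain ⟨i, hi, hmax⟩ := I.exists_max_image e hI
    calc I.card ≤ (Finset.range (e i + 1)).card :=
          Finset.card_le_card_of_injOn e
            (fun j hj => Finset.mem_coe.2 (Finset.mem_range_succ_iff.2 (hmax j hj))) he.injOn
      _ = (s i).card := by rw [Finset.card_range, hcard]
      _ ≤ (I.biUnion s).card := Finset.card_le_card (Finset.subset_biUnion_of_mem s hi)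
  obtain ⟨f, hf, hfs⟩ := (Finset.all_card_le_biUnion_card_iff_exists_injective s).1 hall
  exact ⟨f, hf, fun i => hst i (hfs i)⟩

theorem exists_bijective_forall_rel [Countable ι] [Countable β] {R : ι → β → Prop}
    (hrow : ∀ i, {b | R i b}.Infinite) (hcol : ∀ b, {i | R i b}.Infinite) :
    ∃ f : ι → β, f.Bijective ∧ ∀ i, R i (f i) := by
  obtain ⟨f, hf, hfR⟩ := exists_injective_forall_mem hrow
  obtain ⟨g, hg, hgR⟩ := exists_injective_forall_mem hcol
  exact Function.Embedding.schroeder_bernstein_of_rel hf hg R hfR hgR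

theorem eventually_encode_ge [Encodable ι] (k : ℕ) :
    ∀ᶠ i : ι in cofinite, k ≤ Encodable.encode i :=
  (Nat.cofinite_eq_atTop ▸ Encodable.encode_injective.tendsto_cofinite :
    Tendsto (Encodable.encode : ι → ℕ) cofinite atTop).eventually_ge_atTop k

theorem exists_bijective_mem_window_or_far [Countable ι] [Countable β] {p : ι → Prop}
    {window : ι → Set β} {far : ℕ → ι → Set β} (hp : {i | ¬p i}.Infinite)
    (hwindow : ∀ i, (window i).Infinite) (hfar : ∀ b k, ∀ᶠ i in cofinite, b ∈ far k i)
    (hfar_inter : ∀ i n, (⋂ k ≤ n, far k i).Infinite) :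
    ∃ f : ι → β, f.Bijective ∧ (∀ i, p i → f i ∈ window i) ∧
      ∀ k, ∀ᶠ i in cofinite, ¬p i → f i ∈ far k i := by
  cases nonempty_encodable ι
  cases nonempty_encodable β
  -- Bounding `k` by both codes leaves finitely many constraints on each `i` and on each `b`, while
  -- a bijection still satisfies the `k`-th constraint at all but finitely many `i`.
  let R (i : ι) (b : β) : Prop := (p i → b ∈ window i) ∧
    (¬p i → ∀ k ≤ Encodable.encode i, k ≤ Encodable.encode b → b ∈ far k i)
  have hrow (i : ι) : {b | R i b}.Infinite := by
    by_cases hi : p i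
    · exact (hwindow i).mono fun b hb => ⟨fun _ => hb, fun h => absurd hi h⟩
    · exact (hfar_inter i (Encodable.encode i)).mono fun b hb =>
        ⟨fun h => absurd h hi, fun _ k hk _ => mem_iInter₂.1 hb k hk⟩
  have hcol (b : β) : {i | R i b}.Infinite := by
    have hev : ∀ᶠ i in cofinite, ∀ k ∈ Iic (Encodable.encode b), b ∈ far k i :=
      (eventually_all_finite (finite_Iic _)).2 fun k _ => hfar b k
    refine frequently_cofinite_iff_infinite.1
      ((frequently_cofinite_iff_infinite.2 hp).and_eventually hev |>.mono ?_)
    exact fun i ⟨hi, hb⟩ => ⟨fun h => absurd h hi, fun _ k _ hk => hb k hk⟩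
  obtain ⟨f, hf, hfR⟩ := exists_bijective_forall_rel hrow hcol
  refine ⟨f, hf, fun i => (hfR i).1, fun k => ?_⟩
  filter_upwards [eventually_encode_ge k,
    hf.injective.tendsto_cofinite.eventually (eventually_encode_ge k)] with i hi hfi hpi
  exact (hfR i).2 hpi k hi hfi

theorem exists_bijective_mem_window_and_far [Countable ι] [Countable β] {owner : ι → Option ℕ}
    {window : ι → Set β} {far : ℕ → ι → Set β} (hfree : (owner ⁻¹' {none}).Infinite)
    (hwindow : ∀ i, (window i).Infinite)
    (hwindow_far : ∀ j k, j ≠ k → ∀ᶠ i in cofinite, owner i = some j → window i ⊆ far k i)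
    (hfar : ∀ b k, ∀ᶠ i in cofinite, b ∈ far k i)
    (hfar_inter : ∀ i n, (⋂ k ≤ n, far k i).Infinite) :
    ∃ f : ι → β, f.Bijective ∧ ∀ k, ∀ᶠ i in cofinite,
      (owner i = some k → f i ∈ window i) ∧ (owner i ≠ some k → f i ∈ far k i) := by
  let usable (i : ι) : Prop := ∃ j, owner i = some j ∧ ∀ k < j, window i ⊆ far k i
  have hunusable : {i | ¬usable i}.Infinite := hfree.mono fun i hi ⟨j, hj, _⟩ =>
    Option.some_ne_none j (hj.symm.trans hi)
  obtain ⟨f, hf, hfwindow, hffar⟩ :=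
    exists_bijective_mem_window_or_far hunusable hwindow hfar hfar_inter
  refine ⟨f, hf, fun k => ?_⟩
  have husable : ∀ᶠ i in cofinite, ∀ j ∈ Iio k, owner i = some k → window i ⊆ far j i :=
    (eventually_all_finite (finite_Iio k)).2 fun j hj => hwindow_far k j (ne_of_gt hj)
  have hbefore : ∀ᶠ i in cofinite, ∀ j ∈ Iio k, owner i = some j → window i ⊆ far k i :=
    (eventually_all_finite (finite_Iio k)).2 fun j hj => hwindow_far j k (ne_of_lt hj)
  filter_upwards [husable, hbefore, hffar k] with i hik hbef hfar_i
  refine ⟨fun hi => hfwindow i ⟨k, hi, fun j hj => hik j hj hi⟩, fun hi => ?_⟩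
  by_cases hu : usable i
  · obtain ⟨j, hj, hjk⟩ := hu
    have hmem : f i ∈ window i := hfwindow i ⟨j, hj, hjk⟩
    rcases lt_trichotomy j k with h | rfl | h
    · exact hbef j h hj hmem
    · exact absurd hj hi
    · exact hjk k h hmem
  · exact hfar_i hu

end Assignment

section Construction

theorem infinite_preimage_ratCast {U : Set ℝ} (hU : IsOpen U) (hne : U.Nonempty) :
    ((↑) ⁻¹' U : Set ℚ).Infinite := by
  obtain ⟨q, hq⟩ := Rat.denseRange_cast.exists_mem_open hU hne
  exact infinite_of_mem_nhds q ((hU.preimage Rat.continuous_coe_real).mem_nhds hq)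

theorem infinite_setOf_forall_le_abs_ratCast_sub (ξ : ℕ → ℝ) (ρ : ℝ) (n : ℕ) :
    (⋂ k ≤ n, {q : ℚ | ρ ≤ |(q : ℝ) - ξ k|}).Infinite := by
  have hev : ∀ᶠ q : ℚ in atTop, ∀ k ∈ Iic n, ρ ≤ |(q : ℝ) - ξ k| := by
    refine (eventually_all_finite (finite_Iic n)).2 fun k _ => ?_
    filter_upwards [(tendsto_ratCast_atTop_iff.2 tendsto_id).eventually_ge_atTop (ξ k + ρ)]
      with q (hq : ξ k + ρ ≤ q)
    exact (le_sub_iff_add_le'.2 hq).trans (le_abs_self _)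
  obtain ⟨q₀, hq₀⟩ := eventually_atTop.1 hev
  exact (Ici_infinite q₀).mono fun q hq => mem_iInter₂.2 fun k hk => hq₀ q hq k hk

variable {ι : Type*} [LinearOrder ι] {w r : ι → ℝ} {label : ι → Option ℕ × ℤˣ} {ξ c : ℕ → ℝ}
  {n : ι}

/-- The positions allowed for the index `n`, which is attached to the side `σ` of `ξ k` if its
label is `(some k, σ)` and unconstrained if its label is `(none, σ)`. In the first case, the signed
distance from `ξ k`, scaled by `c k`, has to lie between the two tails, without and with `n`, of
the weights of the indices with the same label. -/
def window (w : ι → ℝ) (label : ι → Option ℕ × ℤˣ) (ξ c : ℕ → ℝ) (n : ι) : Set ℚ :=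
  {q | ∀ k, (label n).1 = some k → c k * ((label n).2 • ((q : ℝ) - ξ k)) ∈
    Ioo (∑' m : Ioi n, (label ⁻¹' {label n}).indicator w m)
      (∑' m : Ici n, (label ⁻¹' {label n}).indicator w m)}

theorem infinite_window (hw : ∀ n, 0 < w n) (hs : Summable w) (hc : ∀ k, 0 < c k) (n : ι) :
    (window w label ξ c n).Infinite := by
  set v := (label ⁻¹' {label n}).indicator w
  have hlt : ∑' m : Ioi n, v m < ∑' m : Ici n, v m := by
    have hvn : v n = w n := indicator_of_mem (s := label ⁻¹' {label n}) rfl w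
    rw [tsum_Ici_eq_add_tsum_Ioi (hs.indicator _)]
    exact lt_add_of_pos_left _ ((hw n).trans_eq hvn.symm)
  rcases hn : (label n).1 with - | k
  · exact infinite_univ.mono fun q _ k hk =>
      absurd (hn.symm.trans hk) (Option.some_ne_none k).symm
  · obtain ⟨y, hy⟩ := nonempty_Ioo.2 hlt
    let g (x : ℝ) : ℝ := c k * ((label n).2 • (x - ξ k))
    have hg : Continuous g := by fun_prop
    have hgy : g (ξ k + (label n).2⁻¹ • (y / c k)) = y := by
      simp only [g, add_sub_cancel_left, smul_inv_smul, mul_div_cancel₀ _ (hc k).ne']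
    refine (infinite_preimage_ratCast (isOpen_Ioo.preimage hg)
      ⟨_, mem_preimage.2 (hgy ▸ hy)⟩).mono fun q hq j hj => ?_
    obtain rfl : k = j := Option.some_injective _ (hn.symm.trans hj)
    exact hq

theorem smul_sub_pos_of_mem_window (hw : 0 ≤ w) (hc : ∀ k, 0 < c k) {k : ℕ}
    (hk : (label n).1 = some k) {q : ℚ} (hq : q ∈ window w label ξ c n) :
    0 < (label n).2 • ((q : ℝ) - ξ k) := by
  have tail_nonneg : 0 ≤ ∑' m : Ioi n, (label ⁻¹' {label n}).indicator w m :=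
    tsum_nonneg fun m => indicator_nonneg (fun i _ => hw i) _
  exact pos_of_mul_pos_right (tail_nonneg.trans_lt (hq k hk).1) (hc k).le

theorem mul_abs_sub_lt_of_mem_window (hw : 0 ≤ w) (hs : Summable w) (hc : ∀ k, 0 < c k) {k : ℕ}
    (hk : (label n).1 = some k) {q : ℚ} (hq : q ∈ window w label ξ c n) :
    c k * |(q : ℝ) - ξ k| < ∑' m : Ici n, w m := by
  rw [← Real.norm_eq_abs, ← norm_units_zsmul (label n).2,
    Real.norm_of_nonneg (smul_sub_pos_of_mem_window hw hc hk hq).le]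
  refine (hq k hk).2.trans_le (((hs.indicator _).subtype _).tsum_le_tsum (fun m => ?_)
    (hs.subtype _))
  exact indicator_le_self' (fun i _ => hw i) _

theorem eventually_window_subset_far [LocallyFiniteOrderBot ι] (hw : 0 ≤ w) (hs : Summable w)
    (hr : Tendsto r cofinite (𝓝 0)) (hc : ∀ k, 0 < c k) {j k : ℕ} (hjk : ξ j ≠ ξ k) :
    ∀ᶠ n in cofinite, (label n).1 = some j →
      window w label ξ c n ⊆ {q : ℚ | r n ≤ |(q : ℝ) - ξ k|} := by
  have hd : 0 < |ξ j - ξ k| / 2 := half_pos (abs_pos.2 (sub_ne_zero.2 hjk))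
  filter_upwards [hr.eventually_le_const hd,
    (tendsto_tsum_Ici_cofinite_zero hs).eventually_lt_const (mul_pos (hc j) hd)]
    with n hrn htail hn q hq
  have hclose : |(q : ℝ) - ξ j| < |ξ j - ξ k| / 2 :=
    lt_of_mul_lt_mul_left ((mul_abs_sub_lt_of_mem_window hw hs hc hn hq).trans htail) (hc j).le
  have htri : |ξ j - ξ k| ≤ |(q : ℝ) - ξ j| + |(q : ℝ) - ξ k| :=
    abs_sub_comm (ξ j) q ▸ abs_sub_le (ξ j) q (ξ k)
  rw [mem_ofPred_eq]
  linarith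

variable [LocallyFiniteOrderBot ι] [SuccOrder ι] [NoMaxOrder ι]

theorem hasRightDensity_of_mem_window_of_far (hw : ∀ n, 0 < w n) (hs : Summable w)
    (hr : ∀ n, 0 < r n) (hwr : Summable fun n => w n / r n) (hc : ∀ k, 0 < c k)
    {φ : ι → ℚ} {k : ℕ} {σ : ℤˣ} (hinf : (label ⁻¹' {(some k, σ)}).Infinite)
    (hlittle : (label ⁻¹' {(some k, σ)}).indicator w =o[cofinite]
      fun n => ∑' m : Ioi n, (label ⁻¹' {(some k, σ)}).indicator w m)
    (hφ : ∀ᶠ n in cofinite, ((label n).1 = some k → φ n ∈ window w label ξ c n) ∧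
      ((label n).1 ≠ some k → r n ≤ |(φ n : ℝ) - ξ k|)) :
    HasRightDensity w (fun n => σ • ((φ n : ℝ) - ξ k)) (c k) := by
  set C := label ⁻¹' {(some k, σ)}
  have hattached : HasRightDensity (C.indicator w) (fun n => σ • ((φ n : ℝ) - ξ k)) (c k) := by
    refine .of_mem_Ioo_tsum (indicator_nonneg fun n _ => (hw n).le) (hs.indicator C) ?_ hlittle
      (hc k) ?_
    · rwa [support_indicator, Function.support_eq_univ fun n => (hw n).ne', inter_univ]
    · filter_upwards [hφ] with n hn hnC
      have hlabel : label n = (some k, σ) := mem_of_indicator_ne_zero (s := C) hnC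
      simpa only [hlabel] using hn.1 (congrArg Prod.fst hlabel) k (congrArg Prod.fst hlabel)
  have hother : HasRightDensity (Cᶜ.indicator w) (fun n => σ • ((φ n : ℝ) - ξ k)) 0 := by
    refine .zero_of_le hr ((hwr.indicator Cᶜ).congr fun n => ?_) ?_
    · by_cases hn : n ∈ C <;> simp [hn]
    · filter_upwards [hφ] with n hn hnC hpos
      have hlabel : n ∈ Cᶜ := mem_of_indicator_ne_zero hnC
      rw [← Real.norm_of_nonneg hpos.le, norm_units_zsmul]
      refine hn.2 fun hk => ?_
      have hside : (label n).2 = -σ :=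
        Int.units_ne_iff_eq_neg.1 fun hσ => hlabel (Prod.ext hk hσ)
      have hneg := smul_sub_pos_of_mem_window (fun n => (hw n).le) hc hk (hn.1 hk)
      rw [hside, Units.neg_smul] at hneg
      exact lt_asymm hpos (neg_pos.1 hneg)
  have hsum := hattached.add hother (hs.indicator C) (hs.indicator Cᶜ)
  rwa [indicator_self_add_compl, add_zero] at hsum

theorem exists_bijective_forall_hasDerivAt_tsum (hw : ∀ n, 0 < w n)
    (hs : Summable w) (hr : ∀ n, 0 < r n) (hr₀ : Tendsto r cofinite (𝓝 0))
    (hwr : Summable fun n => w n / r n) (hinf : ∀ a, (label ⁻¹' {a}).Infinite)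
    (hlittle : ∀ a, (label ⁻¹' {a}).indicator w =o[cofinite]
      fun n => ∑' m : Ioi n, (label ⁻¹' {a}).indicator w m)
    (hξ : ∀ k, Irrational (ξ k)) (hinj : ξ.Injective) (hc : ∀ k, 0 < c k) :
    ∃ φ : ι → ℚ, φ.Bijective ∧
      ∀ k, HasDerivAt (fun x => ∑' n : (fun n => (φ n : ℝ)) ⁻¹' Iio x, w n) (c k) (ξ k) := by
  have : Countable ι := countable_univ_iff.1
    (Function.support_eq_univ (fun n => (hw n).ne') ▸ hs.countable_support)
  have hfree : ((fun n => (label n).1) ⁻¹' {none}).Infinite :=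
    (hinf (none, 1)).mono fun n (hn : label n = (none, 1)) => congrArg Prod.fst hn
  have hfar (q : ℚ) (k : ℕ) : ∀ᶠ n in cofinite, q ∈ {q : ℚ | r n ≤ |(q : ℝ) - ξ k|} :=
    hr₀.eventually_le_const (abs_pos.2 (sub_ne_zero.2 ((hξ k).ne_rat q).symm))
  obtain ⟨φ, hφ, hplace⟩ := exists_bijective_mem_window_and_far hfree
    (infinite_window (ξ := ξ) hw hs hc)
    (fun j k hjk => eventually_window_subset_far (fun n => (hw n).le) hs hr₀ hc (hinj.ne hjk))
    hfar (fun n => infinite_setOf_forall_le_abs_ratCast_sub ξ (r n))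
  refine ⟨φ, hφ, fun k => hasDerivAt_tsum_preimage_Iio hs (fun n => ((hξ k).ne_rat _).symm) ?_⟩
  exact fun σ =>
    hasRightDensity_of_mem_window_of_far hw hs hr hwr hc (hinf _) (hlittle _) (hplace k)

end Construction

section SquareWeights

theorem exists_surjective_forall_add_eq (α : Type*) [Countable α] [Infinite α] :
    ∃ label : ℕ+ → α, label.Surjective ∧ ∀ a, ∃ d : ℕ+, ∀ n, label n = a → label (n + d) = a := by
  obtain ⟨_⟩ := nonempty_denumerable α
  let e := Denumerable.eqv α
  have hval (n : ℕ+) (v : ℕ) : padicValNat 2 n = v ↔ 2 ^ v ∣ (n : ℕ) ∧ ¬2 ^ (v + 1) ∣ (n : ℕ) := by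
    rw [padicValNat_dvd_iff_le n.ne_zero, padicValNat_dvd_iff_le n.ne_zero]
    lia
  refine ⟨fun n => e.symm (padicValNat 2 n), fun a => ⟨2 ^ e a, ?_⟩, fun a =>
    ⟨2 ^ (e a + 1), fun n hn => ?_⟩⟩
  · simp [e]
  · rw [e.symm_apply_eq, hval] at hn ⊢
    rw [PNat.add_coe, PNat.pow_coe]
    exact ⟨(Nat.dvd_add_left (pow_dvd_pow 2 (e a).le_succ)).2 hn.1,
      fun h => hn.2 ((Nat.dvd_add_left dvd_rfl).1 h)⟩

theorem summable_one_div_pnat_sq : Summable fun n : ℕ+ => 1 / (n : ℝ) ^ 2 :=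
  (Real.summable_one_div_nat_pow.2 one_lt_two).comp_injective PNat.coe_injective

theorem add_mul_mem {C : Set ℕ+} {d : ℕ+} (hC : ∀ n ∈ C, n + d ∈ C) {n : ℕ+} (hn : n ∈ C)
    (i : ℕ+) : n + i * d ∈ C := by
  induction i with
  | one => simpa only [one_mul] using hC n hn
  | succ i ih => simpa only [add_one_mul, add_assoc] using hC _ ih

theorem infinite_of_forall_add_mem {C : Set ℕ+} {d : ℕ+} (hC : ∀ n ∈ C, n + d ∈ C)
    (hne : C.Nonempty) : C.Infinite := by
  obtain ⟨n, hn⟩ := hne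
  refine infinite_of_injective_forall_mem (f := fun i : ℕ+ => n + i * d) ?_ (add_mul_mem hC hn)
  exact fun i j hij => mul_right_cancel (add_left_cancel hij)

/-- Each of the `n` terms `n + d, n + 2 * d, …, n + n * d` of `C` has weight at least
`((d + 1) * n)⁻²`. -/
theorem inv_le_tsum_Ioi_indicator_inv_sq {C : Set ℕ+} {d : ℕ+} (hC : ∀ n ∈ C, n + d ∈ C) {n : ℕ+}
    (hn : n ∈ C) :
    1 / ((d + 1 : ℝ) ^ 2 * n) ≤ ∑' m : Ioi n, C.indicator (fun m : ℕ+ => 1 / (m : ℝ) ^ 2) m := by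
  set v := C.indicator fun m : ℕ+ => 1 / (m : ℝ) ^ 2
  have hv : 0 ≤ v := indicator_nonneg fun m _ => by positivity
  have hs : Summable fun m : Ioi n => v m := (summable_one_div_pnat_sq.indicator C).subtype _
  let f (i : ℕ+) : Ioi n := ⟨n + i * d, PNat.lt_add_right _ _⟩
  have hf : f.Injective := fun i j hij =>
    mul_right_cancel (add_left_cancel (congrArg Subtype.val hij))
  have hterm : ∀ i ∈ Finset.Icc 1 n, 1 / ((d + 1) * n : ℝ) ^ 2 ≤ v (f i) := by
    intro i hi
    have hin : (i : ℝ) ≤ n := mod_cast (Finset.mem_Icc.1 hi).2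
    have hsum : (n : ℝ) + i * d ≤ (d + 1) * n := by nlinarith [d.pos]
    rw [show v (f i) = 1 / ((n + i * d : ℕ+) : ℝ) ^ 2 from indicator_of_mem (add_mul_mem hC hn i) _]
    push_cast
    gcongr
  calc 1 / ((d + 1 : ℝ) ^ 2 * n)
      = (Finset.Icc 1 n).card • (1 / ((d + 1) * n : ℝ) ^ 2) := by
        rw [PNat.card_Icc, PNat.one_coe, Nat.add_sub_cancel, nsmul_eq_mul]
        field
    _ ≤ ∑ i ∈ Finset.Icc 1 n, v (f i) := Finset.card_nsmul_le_sum _ _ _ hterm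
    _ ≤ ∑' i, v (f i) := (hs.comp_injective hf).sum_le_tsum _ fun i _ => hv _
    _ ≤ ∑' m : Ioi n, v m := tsum_comp_le_tsum_of_inj hs (fun m => hv _) hf

theorem tendsto_pnatCast_cofinite_atTop : Tendsto (fun n : ℕ+ => (n : ℝ)) cofinite atTop :=
  tendsto_natCast_atTop_atTop.comp (Nat.cofinite_eq_atTop ▸ PNat.coe_injective.tendsto_cofinite)

theorem isLittleO_indicator_inv_sq_tsum_Ioi {C : Set ℕ+} {d : ℕ+} (hC : ∀ n ∈ C, n + d ∈ C) :
    C.indicator (fun m : ℕ+ => 1 / (m : ℝ) ^ 2) =o[cofinite]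
      fun n => ∑' m : Ioi n, C.indicator (fun m : ℕ+ => 1 / (m : ℝ) ^ 2) m := by
  have hnonneg (m : ℕ+) : 0 ≤ C.indicator (fun m : ℕ+ => 1 / (m : ℝ) ^ 2) m :=
    indicator_nonneg (fun m _ => by positivity) m
  refine isLittleO_iff.2 fun ε hε => ?_
  filter_upwards [tendsto_pnatCast_cofinite_atTop.eventually_ge_atTop ((d + 1 : ℝ) ^ 2 / ε)]
    with n hlarge
  have htail : 0 ≤ ∑' m : Ioi n, C.indicator (fun m : ℕ+ => 1 / (m : ℝ) ^ 2) m :=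
    tsum_nonneg fun m => hnonneg m
  rw [Real.norm_of_nonneg (hnonneg n), Real.norm_of_nonneg htail]
  by_cases hn : n ∈ C
  · calc C.indicator (fun m : ℕ+ => 1 / (m : ℝ) ^ 2) n = 1 / (n : ℝ) ^ 2 := indicator_of_mem hn _
      _ ≤ ε * (1 / ((d + 1 : ℝ) ^ 2 * n)) := by
        have hn₀ : (0 : ℝ) < n := mod_cast n.pos
        rw [div_le_iff₀ hε] at hlarge
        rw [mul_one_div, div_le_div_iff₀ (by positivity) (by positivity)]
        nlinarith
      _ ≤ ε * ∑' m : Ioi n, C.indicator (fun m : ℕ+ => 1 / (m : ℝ) ^ 2) m := by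
        gcongr
        exact inv_le_tsum_Ioi_indicator_inv_sq hC hn
  · rw [indicator_of_notMem hn]
    positivity

theorem tendsto_pnat_rpow_neg_half :
    Tendsto (fun n : ℕ+ => (n : ℝ) ^ (-(1 / 2) : ℝ)) cofinite (𝓝 0) :=
  (tendsto_rpow_neg_atTop one_half_pos).comp tendsto_pnatCast_cofinite_atTop

theorem summable_one_div_pnat_sq_div_rpow :
    Summable fun n : ℕ+ => 1 / (n : ℝ) ^ 2 / (n : ℝ) ^ (-(1 / 2) : ℝ) := by
  have hexp : Summable fun n : ℕ => 1 / (n : ℝ) ^ (3 / 2 : ℝ) :=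
    Real.summable_one_div_nat_rpow.2 (by norm_num)
  refine (hexp.comp_injective PNat.coe_injective).congr fun n => ?_
  have hn : (0 : ℝ) < n := mod_cast n.pos
  rw [Function.comp_apply, div_div, ← Real.rpow_natCast, ← Real.rpow_add hn]
  norm_num

end SquareWeights

theorem Gphi_eq_tsum_preimage_Iio (φ : ℕ+ → ℚ) :
    Gphi φ = fun x => ∑' n : (fun n => (φ n : ℝ)) ⁻¹' Iio x, 1 / (n : ℝ) ^ 2 := by
  funext x
  rw [tsum_subtype _ fun n : ℕ+ => 1 / (n : ℝ) ^ 2]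
  rfl

theorem stmt6 (ξ : ℕ → ℝ) (hξ : ∀ k, Irrational (ξ k)) (hinj : Function.Injective ξ)
    (c : ℕ → ℝ) (hc : ∀ k, 0 < c k) :
    ∃ φ : ℕ+ → ℚ, Function.Bijective φ ∧
      ∀ k, HasDerivAt (Gphi φ) (c k) (ξ k) := by
  obtain ⟨label, hsurj, hlabel⟩ := exists_surjective_forall_add_eq (Option ℕ × ℤˣ)
  choose d hd using hlabel
  have hpos (n : ℕ+) : (0 : ℝ) < n := mod_cast n.pos
  have hinf (a : Option ℕ × ℤˣ) : (label ⁻¹' {a}).Infinite :=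
    infinite_of_forall_add_mem (hd a) (hsurj a)
  simp only [Gphi_eq_tsum_preimage_Iio]
  exact exists_bijective_forall_hasDerivAt_tsum (fun n => one_div_pos.2 (pow_pos (hpos n) 2))
    summable_one_div_pnat_sq (fun n => Real.rpow_pos_of_pos (hpos n) _) tendsto_pnat_rpow_neg_half
    summable_one_div_pnat_sq_div_rpow hinf (fun a => isLittleO_indicator_inv_sq_tsum_Ioi (hd a))
    hξ hinj hc
end

section
/- For every countable set A ⊆ ℝ and every function g : A → (0, ∞), there exists a strictly increasing function f : ℝ → ℝ such that f is differentiable at each x ∈ A with f'(x) = g(x), and f'(x) = 0 for almost every x ∈ ℝ. -/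
/-!
Give each `a ∈ A` a monotone step function with derivative `g a` at `a`: rounding `t` towards `0` to
a point of `{0, ±1, ±1/2, ±1/3, …}` moves it by at most `t²`, so the rounded identity has derivative
`1` at `0` although it is locally constant at every other point outside the countable set of jumps.
Rescaling shrinks the region where the function varies, and a generic scale keeps the jumps away
from the other points of `A`.

In the sum of these functions, a term whose centre is at distance at least `s a` from `x` has
difference quotients at `x` bounded by `s a`, where `∑ s a < ∞`. Only finitely many terms violate
this, both for `x ∈ A`, by the choice of `s`, and for almost every `x`, by Borel–Cantelli; hence the
sum can be differentiated termwise at such `x`. Adding a countable dense set of points with positive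
derivative makes the sum strictly increasing.
-/

open Filter Set Topology MeasureTheory

theorem hasDerivAt_tsum_of_eventually_norm_sub_le {ι 𝕜 F : Type*} [NontriviallyNormedField 𝕜]
    [NormedAddCommGroup F] [NormedSpace 𝕜 F] [CompleteSpace F] {u : ι → 𝕜 → F} {u' : ι → F}
    {b : ι → ℝ} {x : 𝕜} (hb : Summable b) (hu : ∀ y, Summable fun i => u i y)
    (hderiv : ∀ i, HasDerivAt (u i) (u' i) x)
    (hbound : ∀ᶠ i in cofinite, ∀ y, ‖u i y - u i x‖ ≤ b i * ‖y - x‖) :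
    HasDerivAt (fun y => ∑' i, u i y) (∑' i, u' i) x := by
  classical
  set E : Set ι := {i | ¬ ∀ y, ‖u i y - u i x‖ ≤ b i * ‖y - x‖}
  have hE : E.Finite := hbound
  have hslope : ∀ i, Tendsto (slope (u i) x) (𝓝[≠] x) (𝓝 (u' i)) := fun i =>
    hasDerivAt_iff_tendsto_slope.1 (hderiv i)
  have hslope_tsum : ∀ y, slope (fun y => ∑' i, u i y) x y = ∑' i, slope (u i) x y := fun y => by
    simp only [slope_def_module, ← (hu y).tsum_sub (hu x),
      ((hu y).sub (hu x)).tsum_const_smul]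
  have hsummable : Summable (E.piecewise (fun i => ‖u' i‖ + 1) b) :=
    hb.congr_cofinite (hE.eventually_cofinite_notMem.mono fun i hi =>
      (piecewise_eq_of_notMem _ _ _ hi).symm)
  have hbound_off : ∀ i ∉ E, ∀ y ≠ x, ‖slope (u i) x y‖ ≤ b i := fun i hi y hyx => by
    rw [slope_def_module, norm_smul, norm_inv, inv_mul_le_iff₀ (norm_pos_iff.2 (sub_ne_zero.2 hyx)),
      mul_comm]
    exact not_not.1 hi y
  have hbound_on : ∀ᶠ y in 𝓝[≠] x, ∀ i ∈ E, ‖slope (u i) x y‖ ≤ ‖u' i‖ + 1 :=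
    (eventually_all_finite hE).2 fun i _ =>
      (hslope i).norm.eventually_le_const (lt_add_one _)
  rw [hasDerivAt_iff_tendsto_slope, funext hslope_tsum]
  refine tendsto_tsum_of_dominated_convergence hsummable hslope ?_
  filter_upwards [hbound_on, self_mem_nhdsWithin] with y hy hyx i
  by_cases hi : i ∈ E
  · simpa only [piecewise_eq_of_mem _ _ _ hi] using hy i hi
  · simpa only [piecewise_eq_of_notMem _ _ _ hi] using hbound_off i hi y hyx

theorem exists_pos_summable_eventually_le_dist {ι X : Type*} [Countable ι] [MetricSpace X]
    {a : ι → X} (ha : Function.Injective a) :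
    ∃ s : ι → ℝ, (∀ i, 0 < s i) ∧ Summable s ∧ ∀ j, ∀ᶠ i in cofinite, s i ≤ dist (a j) (a i) := by
  obtain ⟨k, hk⟩ := exists_injective_nat ι
  have hfin : ∀ i, {j | k j < k i}.Finite := fun i => (finite_Iio (k i)).preimage hk.injOn
  have hsmall : ∀ i, ∃ t > 0, t ≤ (1 / 2 : ℝ) ^ k i ∧ ∀ j, k j < k i → t ≤ dist (a j) (a i) := by
    intro i
    have hdist : ∀ᶠ t in 𝓝[>] (0 : ℝ), ∀ j ∈ {j | k j < k i}, t ≤ dist (a j) (a i) :=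
      (eventually_all_finite (hfin i)).2 fun j hj => nhdsWithin_le_nhds <|
        eventually_le_nhds <| dist_pos.2 fun h => hj.ne (congrArg k (ha h))
    have hpow : ∀ᶠ t in 𝓝[>] (0 : ℝ), t ≤ (1 / 2) ^ k i :=
      nhdsWithin_le_nhds <| eventually_le_nhds <| by positivity
    exact (eventually_mem_nhdsWithin.and (hpow.and hdist)).exists
  choose s hs_pos hs_pow hs_dist using hsmall
  refine ⟨s, hs_pos, ?_, fun j => ?_⟩
  · exact (summable_geometric_two.comp_injective hk).of_nonneg_of_le (fun i => (hs_pos i).le) hs_pow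
  · have hlate : {i | k i ≤ k j}.Finite := (finite_Iic (k j)).preimage hk.injOn
    filter_upwards [hlate.eventually_cofinite_notMem] with i hi
    exact hs_dist i j (not_le.1 hi)

theorem frequently_nhdsGT_notMem_of_countable {C : Set ℝ} (hC : C.Countable) (x : ℝ) :
    ∃ᶠ y in 𝓝[>] x, y ∉ C := by
  intro h
  obtain ⟨z, hxz, hz⟩ := mem_nhdsGT_iff_exists_Ioo_subset.1 h
  obtain ⟨y, hy, hyz⟩ := (hC.dense_compl ℝ).exists_between hxz
  exact hz hyz hy

theorem ae_eventually_cofinite_le_dist {ι : Type*} [Countable ι] {s : ι → ℝ} (hs : Summable s)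
    (a : ι → ℝ) :
    ∀ᵐ x, ∀ᶠ i in cofinite, s i ≤ dist x (a i) := by
  have hvol : ∑' i, volume (Metric.ball (a i) (s i)) ≠ ⊤ := by
    simpa only [Real.volume_ball] using (hs.mul_left 2).tsum_ofReal_ne_top
  filter_upwards [ae_finite_setOfPred_mem hvol] with x hx
  filter_upwards [hx.eventually_cofinite_notMem] with i hi
  exact not_lt.1 hi

theorem strictMono_of_monotone_of_dense_deriv_ne_zero {f : ℝ → ℝ} (hf : Monotone f) {D : Set ℝ}
    (hD : Dense D) (hderiv : ∀ x ∈ D, deriv f x ≠ 0) : StrictMono f := by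
  intro x y hxy
  refine (hf hxy.le).lt_of_ne fun hfxy => ?_
  obtain ⟨z, hzD, hz⟩ := hD.exists_between hxy
  have hconst : f =ᶠ[𝓝 z] fun _ => f x := by
    filter_upwards [Ioo_mem_nhds hz.1 hz.2] with w hw
    exact le_antisymm (hfxy ▸ hf hw.2.le) (hf hw.1.le)
  exact hderiv z hzD (by rw [hconst.deriv_eq, deriv_const])

/-- Rounding of `t` towards `0` to a point of `{0, ±1, ±1/2, ±1/3, …}`, a step function tangent to
the identity at `0`. Both factors vanish at `t = 0`, where `|t|⁻¹ = 0`. -/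
noncomputable def harmonicStep (t : ℝ) : ℝ :=
  Real.sign t * (⌈|t|⁻¹⌉ : ℝ)⁻¹

namespace harmonicStep

theorem apply_neg (t : ℝ) : harmonicStep (-t) = -harmonicStep t := by
  simp only [harmonicStep, Real.sign_neg, abs_neg, neg_mul]

theorem apply_zero : harmonicStep 0 = 0 := by
  simp only [harmonicStep, Real.sign_zero, zero_mul]

theorem apply_of_pos {t : ℝ} (ht : 0 < t) : harmonicStep t = (⌈t⁻¹⌉ : ℝ)⁻¹ := by
  rw [harmonicStep, Real.sign_of_pos ht, abs_of_pos ht, one_mul]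

theorem apply_of_one_le {t : ℝ} (ht : 1 ≤ t) : harmonicStep t = 1 := by
  have hpos : 0 < t := by linarith
  have hceil : ⌈t⁻¹⌉ = 1 :=
    Int.ceil_eq_iff.2 ⟨by simpa using hpos, by simpa using inv_le_one_of_one_le₀ ht⟩
  rw [apply_of_pos hpos, hceil, Int.cast_one, inv_one]

theorem nonneg {t : ℝ} (ht : 0 ≤ t) : 0 ≤ harmonicStep t := by
  rcases ht.eq_or_lt with rfl | ht
  · exact apply_zero.ge
  · rw [apply_of_pos ht]
    positivity

theorem monotone : Monotone harmonicStep := by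
  refine monotone_of_odd_of_monotoneOn_nonneg apply_neg fun s hs t _ hst => ?_
  rcases (mem_Ici.1 hs).eq_or_lt with rfl | hs
  · simpa only [apply_zero] using nonneg hst
  · have ht : 0 < t := hs.trans_le hst
    have hceil : (0 : ℝ) < ⌈t⁻¹⌉ := by exact_mod_cast Int.ceil_pos.2 (inv_pos.2 ht)
    rw [apply_of_pos hs, apply_of_pos ht]
    exact inv_anti₀ hceil (by gcongr)

theorem abs_le_one (t : ℝ) : |harmonicStep t| ≤ 1 := by
  have hle : ∀ t, harmonicStep t ≤ 1 := fun t =>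
    (monotone (le_max_left t 1)).trans_eq (apply_of_one_le (le_max_right t 1))
  exact abs_le'.2 ⟨hle t, apply_neg t ▸ hle (-t)⟩

theorem abs_sub_self_le_sq (t : ℝ) : |harmonicStep t - t| ≤ t ^ 2 := by
  wlog ht : 0 < t generalizing t
  · rcases (not_lt.1 ht).eq_or_lt with rfl | ht
    · simp [apply_zero]
    · simpa only [apply_neg, ← neg_sub', abs_neg, neg_sq] using this (-t) (neg_pos.2 ht)
  have hceil_le : (⌈t⁻¹⌉ : ℝ) ≤ (1 + t) / t := by
    rw [add_div, div_self ht.ne', one_div]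
    exact (Int.ceil_lt_add_one _).le
  have hupper : (⌈t⁻¹⌉ : ℝ)⁻¹ ≤ t := inv_le_of_inv_le₀ ht (Int.le_ceil _)
  have hlower : t / (1 + t) ≤ (⌈t⁻¹⌉ : ℝ)⁻¹ := by
    rw [← inv_div]
    exact inv_anti₀ ((inv_pos.2 ht).trans_le (Int.le_ceil _)) hceil_le
  have hlower' : t - t ^ 2 ≤ t / (1 + t) := by
    rw [le_div_iff₀ (by positivity)]
    nlinarith [pow_pos ht 3]
  rw [apply_of_pos ht, abs_le]
  constructor <;> linarith [sq_nonneg t]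

theorem hasDerivAt_zero : HasDerivAt harmonicStep 1 0 := by
  have hO : (fun t => harmonicStep t - t) =O[𝓝 0] fun t => ‖t - 0‖ ^ 2 :=
    Asymptotics.IsBigO.of_norm_le fun t => by
      simpa only [Real.norm_eq_abs, sub_zero, sq_abs] using abs_sub_self_le_sq t
  have hsub : HasDerivAt (fun t => harmonicStep t - t) 0 0 := by
    simpa using (hO.hasFDerivAt (𝕜 := ℝ) one_lt_two).hasDerivAt
  simpa using hsub.fun_add (hasDerivAt_id' 0)

theorem hasDerivAt_of_inv_notMem_range {t : ℝ} (ht : t⁻¹ ∉ range ((↑) : ℤ → ℝ)) :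
    HasDerivAt harmonicStep 0 t := by
  wlog hpos : 0 < t generalizing t
  · have hne : t ≠ 0 := by
      rintro rfl
      exact ht ⟨0, by simp⟩
    have hneg : (-t)⁻¹ ∉ range ((↑) : ℤ → ℝ) := fun ⟨k, hk⟩ =>
      ht ⟨-k, by rw [Int.cast_neg, hk, inv_neg, neg_neg]⟩
    have hd := this hneg (neg_pos.2 (lt_of_le_of_ne (not_lt.1 hpos) hne))
    simpa [Function.comp_def, apply_neg] using (hd.scomp t (hasDerivAt_neg t)).fun_neg
  have hmem : t⁻¹ ∈ Ioo ((⌈t⁻¹⌉ : ℝ) - 1) ⌈t⁻¹⌉ :=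
    ⟨by linarith [Int.ceil_lt_add_one t⁻¹], (Int.le_ceil _).lt_of_ne fun h => ht ⟨_, h.symm⟩⟩
  have hconst : harmonicStep =ᶠ[𝓝 t] fun _ => harmonicStep t := by
    filter_upwards [lt_mem_nhds hpos, (continuousAt_inv₀ hpos.ne').eventually_mem
      (isOpen_Ioo.mem_nhds hmem)] with y hy hyt
    rw [apply_of_pos hy, apply_of_pos hpos, Int.ceil_eq_iff.2 ⟨hyt.1, hyt.2.le⟩]
  exact (hasDerivAt_const t _).congr_of_eventuallyEq hconst

theorem abs_mul_abs_sub_le {x : ℝ} (hx : 2 ≤ |x|) (y : ℝ) :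
    |x| * |harmonicStep y - harmonicStep x| ≤ 4 * |y - x| := by
  wlog hpos : 0 ≤ x generalizing x y
  · simpa only [apply_neg, ← neg_sub', abs_neg] using
      this (x := -x) (by rwa [abs_neg]) (-y) (by linarith)
  rw [abs_of_nonneg hpos] at hx ⊢
  have hφx : harmonicStep x = 1 := apply_of_one_le (by linarith)
  rcases le_total 1 y with hy | hy
  · rw [hφx, apply_of_one_le hy, sub_self, abs_zero, mul_zero]
    positivity
  · have hjump : |harmonicStep y - harmonicStep x| ≤ 2 :=
      (abs_sub _ _).trans (by linarith [abs_le_one x, abs_le_one y])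
    have hdist : x / 2 ≤ |y - x| := by linarith [neg_le_abs (y - x)]
    calc x * |harmonicStep y - harmonicStep x| ≤ x * 2 := by gcongr
      _ = 4 * (x / 2) := by ring
      _ ≤ 4 * |y - x| := by gcongr

end harmonicStep

/-- The step function `harmonicStep`, centred at `a`, with its jumps scaled to the points
`a ± c / n` and its slope at the centre scaled to `γ`. -/
noncomputable def scaledStep (a γ c x : ℝ) : ℝ :=
  γ * c * harmonicStep ((x - a) / c)

namespace scaledStep

variable {a γ c : ℝ}

theorem monotone (hγ : 0 ≤ γ) (hc : 0 ≤ c) : Monotone (scaledStep a γ c) := fun x y hxy => by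
  unfold scaledStep
  gcongr
  exact harmonicStep.monotone (by gcongr)

theorem abs_le (hγ : 0 ≤ γ) (hc : 0 ≤ c) (x : ℝ) : |scaledStep a γ c x| ≤ γ * c := by
  rw [scaledStep, abs_mul, abs_of_nonneg (mul_nonneg hγ hc)]
  exact mul_le_of_le_one_right (mul_nonneg hγ hc) (harmonicStep.abs_le_one _)

theorem hasDerivAt_of_hasDerivAt_harmonicStep (hc : c ≠ 0) {d x : ℝ}
    (h : HasDerivAt harmonicStep d ((x - a) / c)) : HasDerivAt (scaledStep a γ c) (γ * d) x := by
  have hinner : HasDerivAt (fun y => (y - a) / c) (1 / c) x :=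
    ((hasDerivAt_id' x).sub_const a).div_const c
  refine ((h.comp x hinner).const_mul (γ * c)).congr_deriv ?_
  field_simp

theorem hasDerivAt_center (hc : c ≠ 0) : HasDerivAt (scaledStep a γ c) γ a := by
  have h : HasDerivAt harmonicStep 1 ((a - a) / c) := by
    simpa only [sub_self, zero_div] using harmonicStep.hasDerivAt_zero
  simpa only [mul_one] using hasDerivAt_of_hasDerivAt_harmonicStep hc h

theorem hasDerivAt_of_div_notMem_range (hc : c ≠ 0) {x : ℝ}
    (hx : c / (x - a) ∉ range ((↑) : ℤ → ℝ)) : HasDerivAt (scaledStep a γ c) 0 x := by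
  simpa only [mul_zero] using hasDerivAt_of_hasDerivAt_harmonicStep hc
    (harmonicStep.hasDerivAt_of_inv_notMem_range (by rwa [inv_div]))

theorem countable_not_hasDerivAt_zero (hc : c ≠ 0) :
    {x | ¬ HasDerivAt (scaledStep a γ c) 0 x}.Countable := by
  refine (countable_range fun k : ℤ => a + c / k).mono fun x hx => ?_
  obtain ⟨k, hk⟩ := not_not.1 (mt (hasDerivAt_of_div_notMem_range hc) hx)
  exact ⟨k, by simp only [hk, div_div_cancel₀ hc, add_sub_cancel]⟩

theorem abs_sub_mul_abs_sub_le (hγ : 0 ≤ γ) (hc : 0 < c) {x : ℝ} (hx : 2 * c ≤ |x - a|) (y : ℝ) :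
    |x - a| * |scaledStep a γ c y - scaledStep a γ c x| ≤ 4 * (γ * c) * |y - x| := by
  have hx' : 2 ≤ |(x - a) / c| := by rwa [abs_div, abs_of_pos hc, le_div_iff₀ hc]
  have hstep := harmonicStep.abs_mul_abs_sub_le hx' ((y - a) / c)
  rw [← sub_div, sub_sub_sub_cancel_right, abs_div, abs_div, abs_of_pos hc, div_mul_eq_mul_div,
    ← mul_div_assoc, div_le_div_iff_of_pos_right hc] at hstep
  calc |x - a| * |scaledStep a γ c y - scaledStep a γ c x|
      = γ * c * (|x - a| * |harmonicStep ((y - a) / c) - harmonicStep ((x - a) / c)|) := by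
        rw [scaledStep, scaledStep, ← mul_sub, abs_mul, abs_of_nonneg (by positivity : 0 ≤ γ * c)]
        ring
    _ ≤ γ * c * (4 * |y - x|) := by gcongr
    _ = 4 * (γ * c) * |y - x| := by ring

end scaledStep

theorem exists_generic_scale {γ s : ℝ} (hs : 0 < s) {D : Set ℝ} (hD : D.Countable) (a : ℝ) :
    ∃ c > 0, 2 * c ≤ s ∧ γ * c ≤ s ∧ 4 * (γ * c) ≤ s ^ 2 ∧
      ∀ x ∈ D, x ≠ a → c / (x - a) ∉ range ((↑) : ℤ → ℝ) := by
  have hsmall : ∀ᶠ c in 𝓝[>] (0 : ℝ), 2 * c ≤ s ∧ γ * c ≤ s ∧ 4 * (γ * c) ≤ s ^ 2 := by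
    have hlin : ∀ b t : ℝ, 0 < t → ∀ᶠ c in 𝓝[>] (0 : ℝ), b * c ≤ t := fun b t ht =>
      nhdsWithin_le_nhds <|
        (Continuous.tendsto' (by fun_prop) 0 0 (mul_zero b)).eventually_le_const ht
    simpa only [mul_assoc] using
      (hlin 2 s hs).and ((hlin γ s hs).and (hlin (4 * γ) (s ^ 2) (by positivity)))
  have hC : (⋃ k : ℤ, (fun x => k * (x - a)) '' D).Countable :=
    countable_iUnion fun k => hD.image _
  obtain ⟨c, hcC, hc, hc₁, hc₂, hc₃⟩ := ((frequently_nhdsGT_notMem_of_countable hC 0).and_eventually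
    (eventually_mem_nhdsWithin.and hsmall)).exists
  refine ⟨c, hc, hc₁, hc₂, hc₃, fun x hxD hxa ⟨k, hk⟩ => hcC (mem_iUnion.2 ⟨k, x, hxD, ?_⟩)⟩
  simp only [hk, div_mul_cancel₀ c (sub_ne_zero.2 hxa)]

theorem exists_monotone_step {γ s : ℝ} (hγ : 0 ≤ γ) (hs : 0 < s) {D : Set ℝ} (hD : D.Countable)
    (a : ℝ) :
    ∃ h : ℝ → ℝ, Monotone h ∧ (∀ x, |h x| ≤ s) ∧ HasDerivAt h γ a ∧
      (∀ x ∈ D, x ≠ a → HasDerivAt h 0 x) ∧ {x | ¬ HasDerivAt h 0 x}.Countable ∧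
      ∀ x y, s ≤ |x - a| → |h y - h x| ≤ s * |y - x| := by
  obtain ⟨c, hc, hcs, hγc, hγc_sq, hcD⟩ := exists_generic_scale (γ := γ) hs hD a
  refine ⟨scaledStep a γ c, scaledStep.monotone hγ hc.le,
    fun x => (scaledStep.abs_le hγ hc.le x).trans hγc, scaledStep.hasDerivAt_center hc.ne',
    fun x hxD hxa => scaledStep.hasDerivAt_of_div_notMem_range hc.ne' (hcD x hxD hxa),
    scaledStep.countable_not_hasDerivAt_zero hc.ne', fun x y hx => ?_⟩
  refine le_of_mul_le_mul_left ?_ hs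
  calc s * |scaledStep a γ c y - scaledStep a γ c x|
      ≤ |x - a| * |scaledStep a γ c y - scaledStep a γ c x| := by gcongr
    _ ≤ 4 * (γ * c) * |y - x| := scaledStep.abs_sub_mul_abs_sub_le hγ hc (hcs.trans hx) y
    _ ≤ s ^ 2 * |y - x| := by gcongr
    _ = s * (s * |y - x|) := by ring

theorem exists_monotone_hasDerivAt_of_countable {A : Set ℝ} (hA : A.Countable) {g : ℝ → ℝ}
    (hg : ∀ x ∈ A, 0 ≤ g x) :
    ∃ f : ℝ → ℝ, Monotone f ∧ (∀ x ∈ A, HasDerivAt f (g x) x) ∧ ∀ᵐ x, HasDerivAt f 0 x := by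
  classical
  have := hA.to_subtype
  obtain ⟨s, hs_pos, hs_sum, hs_dist⟩ :=
    exists_pos_summable_eventually_le_dist (Subtype.val_injective (p := (· ∈ A)))
  choose h hmono hle hcenter hoff hcount hlip using fun a : A =>
    exists_monotone_step (hg a a.2) (hs_pos a) hA a
  have hsum : ∀ y, Summable fun a => h a y := fun y => hs_sum.of_norm_bounded fun a => hle a y
  have hderiv : ∀ (x : ℝ) (d : A → ℝ), (∀ᶠ a in cofinite, s a ≤ dist x a) →
      (∀ a, HasDerivAt (h a) (d a) x) → HasDerivAt (fun y => ∑' a, h a y) (∑' a, d a) x :=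
    fun x d hx hd => hasDerivAt_tsum_of_eventually_norm_sub_le hs_sum hsum hd
      (hx.mono fun a ha y => hlip a x y ha)
  refine ⟨fun y => ∑' a, h a y, fun x y hxy => ?_, fun x hx => ?_, ?_⟩
  · exact (hsum x).tsum_le_tsum (fun a => hmono a hxy) (hsum y)
  · have hd : ∀ a : A, HasDerivAt (h a) ((Pi.single ⟨x, hx⟩ (g x) : A → ℝ) a) x := fun a => by
      rcases eq_or_ne a ⟨x, hx⟩ with rfl | hne
      · simpa only [Pi.single_eq_same] using hcenter ⟨x, hx⟩
      · simpa only [Pi.single_eq_of_ne hne] using hoff a x hx fun h => hne (Subtype.ext h.symm)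
    simpa only [tsum_pi_single] using hderiv x _ (hs_dist ⟨x, hx⟩) hd
  · have hzero : ∀ᵐ x, ∀ a, HasDerivAt (h a) 0 x :=
      ae_all_iff.2 fun a => (hcount a).measure_zero volume
    filter_upwards [hzero, ae_eventually_cofinite_le_dist hs_sum (↑)] with x hx hdist
    simpa only [tsum_zero] using hderiv x (fun _ => 0) hdist hx

theorem stmt7_general (A : Set ℝ) (hA : A.Countable) (g : ℝ → ℝ) (hg : ∀ x ∈ A, 0 ≤ g x) :
    ∃ f : ℝ → ℝ, StrictMono f ∧ (∀ x ∈ A, HasDerivAt f (g x) x) ∧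
      ∀ᵐ x : ℝ ∂volume, HasDerivAt f 0 x := by
  classical
  obtain ⟨D, hDA, hDc, hD⟩ := (hA.dense_compl ℝ).exists_countable_dense_subset
  have hG : ∀ x ∈ A ∪ D, 0 ≤ A.piecewise g 1 x := fun x _ => by
    by_cases hx : x ∈ A
    · simpa only [piecewise_eq_of_mem _ _ _ hx] using hg x hx
    · simp only [piecewise_eq_of_notMem _ _ _ hx, Pi.one_apply, zero_le_one]
  obtain ⟨f, hmono, hderiv, hae⟩ := exists_monotone_hasDerivAt_of_countable (hA.union hDc) hG
  refine ⟨f, ?_, fun x hx => ?_, hae⟩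
  · refine strictMono_of_monotone_of_dense_deriv_ne_zero hmono hD fun x hx => ?_
    rw [(hderiv x (.inr hx)).deriv, piecewise_eq_of_notMem _ _ _ (hDA hx)]
    exact one_ne_zero
  · simpa only [piecewise_eq_of_mem _ _ _ hx] using hderiv x (.inl hx)

theorem stmt7 (A : Set ℝ) (hA : A.Countable) (g : ℝ → ℝ) (hg : ∀ x ∈ A, 0 < g x) :
    ∃ f : ℝ → ℝ, StrictMono f ∧ (∀ x ∈ A, HasDerivAt f (g x) x) ∧
      ∀ᵐ x : ℝ ∂MeasureTheory.volume, HasDerivAt f 0 x :=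
  stmt7_general A hA g fun x hx => (hg x hx).le
end

section
/- For any increasing function G : ℝ → ℝ, any real ξ, any c ∈ ℝ, and any strictly decreasing sequence (x_m) of positive reals tending to 0 with lim_{m→∞} x_{m+1}/x_m = 1: if lim_{m→∞} (G(ξ+x_m) − G(ξ))/x_m = c and lim_{m→∞} (G(ξ) − G(ξ−x_m))/x_m = c, then G is differentiable at ξ with G'(ξ) = c. -/
/-!
If `u` tends to `a` from the right, then every `t > a` close to `a` satisfies `u (m + 1) < t ≤ u m`
for some large `m`, and monotonicity of `f` gives
`(f (u (m + 1)) - f a) / (u m - a) ≤ slope f a t ≤ (f (u m) - f a) / (u (m + 1) - a)`.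
The two bounds are the slopes at `u (m + 1)` and `u m`, multiplied resp. divided by
`(u (m + 1) - a) / (u m - a) → 1`, so convergence of the slopes along `u` forces convergence of the
slopes along every approach to `a` from the right. The left side follows by the symmetry
`t ↦ -f (-t)`.
-/

open Filter Set Topology

theorem exists_ge_mem_Ioc_succ {α : Type*} [LinearOrder α] {u : ℕ → α} {t : α} {N n : ℕ}
    (hN : t ≤ u N) (hNn : N ≤ n) (hn : u n < t) : ∃ m ≥ N, t ∈ Ioc (u (m + 1)) (u m) := by
  by_contra! hcross
  have hle : ∀ k ≥ N, t ≤ u k := fun k hk ↦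
    Nat.le_induction hN (fun m hm htm ↦ not_lt.1 fun hlt ↦ hcross m hm ⟨hlt, htm⟩) k hk
  exact (hle n hNn).not_gt hn

section LinearOrder

variable {α β : Type*} [LinearOrder α] [TopologicalSpace α] [OrderTopology α]
  {a : α} {u : ℕ → α}

theorem eventually_nhdsGT_of_forall_mem_Ioc_succ {p : α → Prop} (hu : Tendsto u atTop (𝓝[>] a))
    (hp : ∀ᶠ m in atTop, ∀ t ∈ Ioc (u (m + 1)) (u m), p t) : ∀ᶠ t in 𝓝[>] a, p t := by
  obtain ⟨hua, hu_gt⟩ := tendsto_nhdsWithin_iff.1 hu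
  obtain ⟨N, hN⟩ := eventually_atTop.1 (hp.and hu_gt)
  filter_upwards [Ioo_mem_nhdsGT (hN N le_rfl).2] with t ht
  obtain ⟨n, hnt, hNn⟩ := ((hua.eventually_lt_const ht.1).and (eventually_ge_atTop N)).exists
  obtain ⟨m, hm, htm⟩ := exists_ge_mem_Ioc_succ ht.2.le hNn hnt
  exact (hN m hm).1 t htm

theorem tendsto_nhdsGT_of_forall_mem_Ioc_succ [LinearOrder β] [TopologicalSpace β]
    [OrderTopology β] {f : α → β} {lo hi : ℕ → β} {b : β} (hu : Tendsto u atTop (𝓝[>] a))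
    (hlo : Tendsto lo atTop (𝓝 b)) (hhi : Tendsto hi atTop (𝓝 b))
    (hf : ∀ᶠ m in atTop, ∀ t ∈ Ioc (u (m + 1)) (u m), f t ∈ Icc (lo m) (hi m)) :
    Tendsto f (𝓝[>] a) (𝓝 b) := by
  refine tendsto_order.2 ⟨fun b' hb' ↦ ?_, fun b' hb' ↦ ?_⟩ <;>
    apply eventually_nhdsGT_of_forall_mem_Ioc_succ hu
  · filter_upwards [hf, hlo.eventually_const_lt hb'] with m hfm hm t ht
    exact hm.trans_le (hfm t ht).1
  · filter_upwards [hf, hhi.eventually_lt_const hb'] with m hfm hm t ht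
    exact (hfm t ht).2.trans_lt hm

end LinearOrder

theorem slope_neg_comp_neg {k E : Type*} [Field k] [AddCommGroup E] [Module k E] (f : k → E)
    (a t : k) : slope (fun r ↦ -f (-r)) (-a) (-t) = slope f a t := by
  rw [slope_comm f]
  simp only [slope_def_module, neg_neg, neg_sub_neg]

section LinearOrderedField

variable {𝕜 : Type*} [Field 𝕜] [LinearOrder 𝕜] [IsStrictOrderedRing 𝕜]
  {f : 𝕜 → 𝕜} {a c : 𝕜}

theorem slope_mem_Icc_of_monotoneOn {p q t : 𝕜} (hf : MonotoneOn f (Icc a q)) (hp : a < p)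
    (ht : t ∈ Icc p q) :
    slope f a t ∈ Icc ((f p - f a) / (q - a)) ((f q - f a) / (p - a)) := by
  have hat : a < t := hp.trans_le ht.1
  have haq : a ≤ q := hat.le.trans ht.2
  have ha_mem : a ∈ Icc a q := left_mem_Icc.2 haq
  have ht_mem : t ∈ Icc a q := ⟨hat.le, ht.2⟩
  have hfat : f a ≤ f t := hf ha_mem ht_mem hat.le
  have hfpt : f p ≤ f t := hf ⟨hp.le, ht.1.trans ht.2⟩ ht_mem ht.1
  have hftq : f t ≤ f q := hf ht_mem (right_mem_Icc.2 haq) ht.2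
  rw [slope_def_field]
  constructor
  · exact div_le_div₀ (sub_nonneg.2 hfat) (sub_le_sub_right hfpt _) (sub_pos.2 hat)
      (sub_le_sub_right ht.2 _)
  · exact div_le_div₀ (sub_nonneg.2 (hfat.trans hftq)) (sub_le_sub_right hftq _) (sub_pos.2 hp)
      (sub_le_sub_right ht.1 _)

variable [TopologicalSpace 𝕜] [OrderTopology 𝕜] {s : Set 𝕜} {u : ℕ → 𝕜}

theorem tendsto_slope_nhdsGT_of_monotoneOn (hs : s ∈ 𝓝[≥] a) (hf : MonotoneOn f s)
    (hu : Tendsto u atTop (𝓝[>] a))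
    (hratio : Tendsto (fun m ↦ (u (m + 1) - a) / (u m - a)) atTop (𝓝 1))
    (hslope : Tendsto (fun m ↦ slope f a (u m)) atTop (𝓝 c)) :
    Tendsto (slope f a) (𝓝[>] a) (𝓝 c) := by
  have hu_gt : ∀ᶠ m in atTop, a < u m := (tendsto_nhdsWithin_iff.1 hu).2
  have hu_succ_gt : ∀ᶠ m in atTop, a < u (m + 1) := (tendsto_add_atTop_nat 1).eventually hu_gt
  have hmono : ∀ᶠ m in atTop, MonotoneOn f (Icc a (u m)) := by
    obtain ⟨b, hab, hbs⟩ := mem_nhdsGE_iff_exists_Icc_subset.1 hs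
    filter_upwards [hu.eventually (Ioo_mem_nhdsGT hab)] with m hm
    exact hf.mono ((Icc_subset_Icc_right hm.2.le).trans hbs)
  have hlo : Tendsto (fun m ↦ (f (u (m + 1)) - f a) / (u m - a)) atTop (𝓝 c) := by
    rw [← mul_one c]
    refine ((hslope.comp (tendsto_add_atTop_nat 1)).mul hratio).congr' ?_
    filter_upwards [hu_succ_gt] with m hm
    rw [Function.comp_apply, slope_def_field, div_mul_div_cancel₀ (sub_ne_zero.2 hm.ne')]
  have hhi : Tendsto (fun m ↦ (f (u m) - f a) / (u (m + 1) - a)) atTop (𝓝 c) := by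
    rw [← div_one c]
    refine (hslope.div hratio one_ne_zero).congr' ?_
    filter_upwards [hu_gt] with m hm
    rw [Pi.div_apply, slope_def_field, div_div_div_cancel_right₀ (sub_ne_zero.2 hm.ne')]
  apply tendsto_nhdsGT_of_forall_mem_Ioc_succ hu hlo hhi
  filter_upwards [hmono, hu_succ_gt] with m hfm hm t ht
  exact slope_mem_Icc_of_monotoneOn hfm hm (Ioc_subset_Icc_self ht)

theorem tendsto_slope_nhdsLT_of_monotoneOn (hs : s ∈ 𝓝[≤] a) (hf : MonotoneOn f s)
    (hu : Tendsto u atTop (𝓝[<] a))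
    (hratio : Tendsto (fun m ↦ (u (m + 1) - a) / (u m - a)) atTop (𝓝 1))
    (hslope : Tendsto (fun m ↦ slope f a (u m)) atTop (𝓝 c)) :
    Tendsto (slope f a) (𝓝[<] a) (𝓝 c) := by
  have hmono : MonotoneOn (fun r ↦ -f (-r)) (Neg.neg ⁻¹' s) := fun p hp q hq hpq ↦
    neg_le_neg (hf hq hp (neg_le_neg hpq))
  have hreflect : Tendsto (slope (fun r ↦ -f (-r)) (-a)) (𝓝[>] (-a)) (𝓝 c) := by
    apply tendsto_slope_nhdsGT_of_monotoneOn (u := fun m ↦ -u m) (tendsto_neg_nhdsGE_neg hs) hmono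
      (tendsto_neg_nhdsLT.comp hu)
    · simpa only [neg_sub_neg, ← neg_sub _ a, neg_div_neg_eq] using hratio
    · simpa only [slope_neg_comp_neg] using hslope
  exact (hreflect.comp tendsto_neg_nhdsLT).congr (slope_neg_comp_neg f a)

end LinearOrderedField

theorem stmt12_general {G : ℝ → ℝ} {s : Set ℝ} {ξ c : ℝ} {x y : ℕ → ℝ} (hs : s ∈ 𝓝 ξ)
    (hG : MonotoneOn G s)
    (hx : Tendsto x atTop (𝓝[>] 0)) (hxratio : Tendsto (fun m ↦ x (m + 1) / x m) atTop (𝓝 1))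
    (hright : Tendsto (fun m ↦ (G (ξ + x m) - G ξ) / x m) atTop (𝓝 c))
    (hy : Tendsto y atTop (𝓝[>] 0)) (hyratio : Tendsto (fun m ↦ y (m + 1) / y m) atTop (𝓝 1))
    (hleft : Tendsto (fun m ↦ (G ξ - G (ξ - y m)) / y m) atTop (𝓝 c)) :
    HasDerivAt G c ξ := by
  obtain ⟨hx0, hx_pos⟩ := tendsto_nhdsWithin_iff.1 hx
  obtain ⟨hy0, hy_pos⟩ := tendsto_nhdsWithin_iff.1 hy
  have hxξ : Tendsto (fun m ↦ ξ + x m) atTop (𝓝[>] ξ) :=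
    tendsto_nhdsWithin_iff.2
      ⟨by simpa using hx0.const_add ξ, hx_pos.mono fun _ ↦ lt_add_of_pos_right ξ⟩
  have hyξ : Tendsto (fun m ↦ ξ - y m) atTop (𝓝[<] ξ) :=
    tendsto_nhdsWithin_iff.2
      ⟨by simpa using hy0.const_sub ξ, hy_pos.mono fun _ ↦ sub_lt_self ξ⟩
  refine hasDerivAt_iff_tendsto_slope_left_right.2 ⟨?_, ?_⟩
  · apply tendsto_slope_nhdsLT_of_monotoneOn (mem_nhdsWithin_of_mem_nhds hs) hG hyξ
    · simpa only [sub_sub_cancel_left, neg_div_neg_eq] using hyratio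
    · simpa only [slope_comm G ξ, slope_def_field, sub_sub_cancel] using hleft
  · apply tendsto_slope_nhdsGT_of_monotoneOn (mem_nhdsWithin_of_mem_nhds hs) hG hxξ
    · simpa only [add_sub_cancel_left] using hxratio
    · simpa only [slope_def_field, add_sub_cancel_left] using hright

open Filter in
theorem stmt12 (G : ℝ → ℝ) (hG : Monotone G) (ξ c : ℝ) (x : ℕ → ℝ)
    (hpos : ∀ m, 0 < x m) (hanti : StrictAnti x)
    (hlim : Tendsto x atTop (nhds 0))
    (hratio : Tendsto (fun m => x (m + 1) / x m) atTop (nhds 1))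
    (hright : Tendsto (fun m => (G (ξ + x m) - G ξ) / x m) atTop (nhds c))
    (hleft : Tendsto (fun m => (G ξ - G (ξ - x m)) / x m) atTop (nhds c)) :
    HasDerivAt G c ξ :=
  have hx : Tendsto x atTop (𝓝[>] 0) := tendsto_nhdsWithin_iff.2 ⟨hlim, .of_forall hpos⟩
  stmt12_general univ_mem (hG.monotoneOn _) hx hratio hright hx hratio hleft
end

section
/- There exists a bijection φ : ℕ → ℚ such that for no real ξ does one have 0 < G_φ'(ξ) < ∞; i.e., membership of G_φ in the class of singular functions with a positive finite derivative somewhere depends on the choice of the enumeration φ. -/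
/-!
Let the integers occupy most of the index set, and place the non-integer rationals `r 0, r 1, …` on
a sparse set of indices. A scale `h k`, small compared with the mutual distances of `r 0, …, r k`,
can be fixed first, and the weights of `r (k + 1), r (k + 2), …` can then be made negligible
compared with `h k`. Around any `ξ`, one of `[ξ - h k, ξ - h k / 2]` and `[ξ + h k / 2, ξ + h k]`
contains none of `r 0, …, r k`, and for large `k` neither contains an integer. The increment over
that interval is thus `o(h k)`, whereas a derivative `d` at `ξ` would make it
`d * h k / 2 + o(h k)`. Hence `d = 0`.
-/

open Asymptotics Filter Function Set Topology

section HalfIncrement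

variable {κ E : Type*} [NormedAddCommGroup E] [NormedSpace ℝ E]

lemma eq_zero_of_hasDerivAt_of_isLittleO_sub_half {f : ℝ → E} {d : E} {ξ : ℝ} {l : Filter κ}
    [l.NeBot] {t : κ → ℝ} (hf : HasDerivAt f d ξ) (ht : Tendsto t l (𝓝[≠] 0))
    (ho : (fun k ↦ f (ξ + t k) - f (ξ + t k / 2)) =o[l] t) : d = 0 := by
  have hinc : HasDerivAt (fun s ↦ f (ξ + s) - f (ξ + s / 2)) (d - (1 / 2 : ℝ) • d) 0 := by
    have hfull : HasDerivAt (fun s ↦ f (ξ + s)) d 0 :=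
      HasDerivAt.comp_const_add ξ 0 (by simpa using hf)
    have hhalf : HasDerivAt (fun s ↦ f (ξ + s / 2)) ((1 / 2 : ℝ) • d) 0 :=
      HasDerivAt.scomp (0 : ℝ) (by simpa using hf)
        (((hasDerivAt_id (0 : ℝ)).div_const 2).const_add ξ)
    exact hfull.sub hhalf
  have hlim : Tendsto (fun k ↦ (t k)⁻¹ • (f (ξ + t k) - f (ξ + t k / 2))) l
      (𝓝 (d - (1 / 2 : ℝ) • d)) := by
    simpa [comp_def] using (hasDerivAt_iff_tendsto_slope_zero.1 hinc).comp ht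
  have hzero : d - (1 / 2 : ℝ) • d = 0 :=
    tendsto_nhds_unique hlim ho.tendsto_inv_smul_nhds_zero
  have hhalf : (1 / 2 : ℝ) • d = 0 := by
    rw [← hzero]
    module
  exact (smul_eq_zero.1 hhalf).resolve_left (by norm_num)

end HalfIncrement

section Gaps

lemma notMem_uIcc_add_half {ξ t : ℝ} (ht : t ≠ 0) : ξ ∉ uIcc (ξ + t / 2) (ξ + t) := by
  intro hξ
  rcases ht.lt_or_gt with ht | ht <;> rcases mem_uIcc.1 hξ with h | h <;> linarith [h.1, h.2]

/-- Around every real number, one of the two halves of the annulus of radii `h / 2` and `h` (the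
left one for `t = -h`, the right one for `t = h`) misses `s`. A jump function with its large jumps
in `s` then has a small increment over that half. -/
def HasGapsAtScale (s : Set ℝ) (h : ℝ) : Prop :=
  ∀ ξ : ℝ, ∃ t : ℝ, |t| = h ∧ Disjoint s (uIcc (ξ + t / 2) (ξ + t))

lemma hasGapsAtScale_of_pairwise_lt_dist {s : Set ℝ} {h : ℝ} (hh : 0 < h)
    (hs : s.Pairwise fun x y ↦ 2 * h < dist x y) : HasGapsAtScale s h := by
  intro ξ
  by_contra! hmeet
  obtain ⟨x, hxs, hx⟩ := not_disjoint_iff.1 (hmeet h (abs_of_pos hh))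
  obtain ⟨y, hys, hy⟩ := not_disjoint_iff.1 (hmeet (-h) (by rw [abs_neg, abs_of_pos hh]))
  rw [uIcc_of_le (by linarith)] at hx
  rw [uIcc_of_ge (by linarith)] at hy
  obtain ⟨hx₁, hx₂⟩ := hx
  obtain ⟨hy₁, hy₂⟩ := hy
  have hdist : 2 * h < dist x y := hs hxs hys (by linarith)
  rw [Real.dist_eq, abs_of_pos (by linarith)] at hdist
  linarith

lemma eventually_hasGapsAtScale_of_finite {s : Set ℝ} (hs : s.Finite) :
    ∀ᶠ h in 𝓝[>] (0 : ℝ), HasGapsAtScale s h := by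
  have hsep : ∀ᶠ h in 𝓝[>] (0 : ℝ), s.Pairwise fun x y ↦ 2 * h < dist x y := by
    refine (eventually_all_finite hs).2 fun x _ ↦ (eventually_all_finite hs).2 fun y _ ↦ ?_
    refine eventually_imp_distrib_left.2 fun hxy ↦ ?_
    filter_upwards [Ioo_mem_nhdsGT (half_pos (dist_pos.2 hxy))] with h hh
    linarith [hh.2]
  filter_upwards [hsep, self_mem_nhdsWithin] with h hs hh
  exact hasGapsAtScale_of_pairwise_lt_dist hh hs

end Gaps

section Enumeration

lemma preimage_subset_image_Ioi {ι α κ : Type*} [LinearOrder κ] {x : ι → α} {n : κ → ι} {k : κ}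
    {s : Set α} (hle : Disjoint (x '' (n '' Iic k)) s) (hcompl : Disjoint (x '' (range n)ᶜ) s) :
    x ⁻¹' s ⊆ n '' Ioi k := by
  intro i hi
  obtain ⟨j, rfl⟩ : i ∈ range n := by
    by_contra hi'
    exact disjoint_left.1 hcompl (mem_image_of_mem x hi') hi
  refine mem_image_of_mem n (lt_of_not_ge fun hjk ↦ ?_)
  exact disjoint_left.1 hle (mem_image_of_mem x (mem_image_of_mem n hjk)) hi

lemma exists_equiv_comp_eq {α β γ : Type*} [Countable α] [Countable β] {n : γ → α} {r : γ → β}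
    (hn : Injective n) (hr : Injective r) (hnc : (range n)ᶜ.Infinite) (hrc : (range r)ᶜ.Infinite) :
    ∃ φ : α ≃ β, φ ∘ n = r := by
  have := hnc.to_subtype
  have := hrc.to_subtype
  let f : range n ↪ β := ((Equiv.ofInjective n hn).symm.toEmbedding).trans ⟨r, hr⟩
  have hf : range f = range r := by
    simp [f, range_comp]
  obtain ⟨φ, hφ⟩ := Cardinal.extend_function f (hf ▸ nonempty_equiv_of_countable)
  refine ⟨φ, funext fun k ↦ ?_⟩
  simpa [f] using hφ ⟨n k, mem_range_self k⟩

lemma exists_injective_forall_norm_tsum_lt {ι E : Type*} [Infinite ι] [NormedAddCommGroup E]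
    {w : ι → E} (hw : Summable w) {ε : ℕ → ℝ} (hε : ∀ k, 0 < ε k) :
    ∃ n : ℕ → ι, Injective n ∧ (range n)ᶜ.Infinite ∧
      ∀ k, ∀ t ⊆ n '' Ioi k, ‖∑' i : t, w i‖ < ε k := by
  choose s hs using fun k ↦ hw.tsum_vanishing (Metric.ball_mem_nhds (0 : E) (hε k))
  let e : ℕ ⊕ ℕ ↪ ι := Equiv.natSumNatEquivNat.toEmbedding.trans (Infinite.natEmbedding ι)
  have hinl : Injective fun i ↦ e (.inl i) := e.injective.comp Sum.inl_injective
  have havoid (k : ℕ) : ∀ᶠ i in atTop, e (.inl i) ∉ s k := by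
    rw [← Nat.cofinite_eq_atTop]
    exact hinl.tendsto_cofinite.eventually (s k).finite_toSet.eventually_cofinite_notMem
  obtain ⟨m, hm, hms⟩ := extraction_forall_of_eventually fun j ↦
    (eventually_all_finite (finite_Iio j)).2 fun k _ ↦ havoid k
  refine ⟨fun j ↦ e (.inl (m j)), hinl.comp hm.injective, ?_, fun k t ht ↦ ?_⟩
  · refine infinite_of_injective_forall_mem (f := fun i ↦ e (.inr i))
      (e.injective.comp Sum.inr_injective) ?_
    rintro i ⟨j, hj⟩
    exact Sum.inl_ne_inr (e.injective hj)
  · rw [← mem_ball_zero_iff]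
    refine hs k t (disjoint_left.2 fun i hit ↦ ?_)
    obtain ⟨j, hkj, rfl⟩ := ht hit
    exact hms j k hkj

end Enumeration

section JumpFunction

variable {ι E : Type*} [NormedAddCommGroup E]

/-- The pure jump function with a jump of size `w i` at each point `x i`; it generalizes `Gphi` to
vector-valued weights. The jump at `x i` is not counted at `x i` itself, as in `Gphi`. -/
noncomputable def jumpFunction (w : ι → E) (x : ι → ℝ) (t : ℝ) : E :=
  ∑' i : x ⁻¹' Iio t, w i

lemma Gphi_eq_jumpFunction (φ : ℕ+ → ℚ) :
    Gphi φ = jumpFunction (fun n : ℕ+ ↦ 1 / ((n : ℕ) : ℝ) ^ 2) (fun n ↦ (φ n : ℝ)) := by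
  ext t
  rw [Gphi, jumpFunction, tsum_subtype _ fun n : ℕ+ ↦ 1 / ((n : ℕ) : ℝ) ^ 2]
  rfl

variable [CompleteSpace E] {w : ι → E} {x : ι → ℝ}

lemma jumpFunction_sub_jumpFunction (hw : Summable w) {a b : ℝ} (hab : a ≤ b) :
    jumpFunction w x b - jumpFunction w x a = ∑' i : x ⁻¹' Ico a b, w i := by
  have hunion : x ⁻¹' Iio b = x ⁻¹' Iio a ∪ x ⁻¹' Ico a b := by
    rw [← preimage_union, Iio_union_Ico_eq_Iio hab]
  have hdisj : Disjoint (x ⁻¹' Iio a) (x ⁻¹' Ico a b) :=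
    (Iio_disjoint_Ici le_rfl).mono_right Ico_subset_Ici_self |>.preimage x
  rw [jumpFunction, hunion, (hw.subtype _).tsum_union_disjoint hdisj (hw.subtype _), jumpFunction,
    add_sub_cancel_left]

lemma norm_jumpFunction_sub_lt (hw : Summable w) {a b ε : ℝ}
    (h : ∀ t ⊆ x ⁻¹' uIcc a b, ‖∑' i : t, w i‖ < ε) :
    ‖jumpFunction w x b - jumpFunction w x a‖ < ε := by
  wlog hab : a ≤ b generalizing a b
  · rw [norm_sub_rev]
    exact this (by rwa [uIcc_comm]) (le_of_not_ge hab)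
  · rw [jumpFunction_sub_jumpFunction hw hab]
    exact h _ (preimage_mono (Ico_subset_Icc_self.trans Icc_subset_uIcc))

variable [NormedSpace ℝ E]

lemma eq_zero_of_hasDerivAt_jumpFunction (hw : Summable w) {n : ℕ → ι} {h : ℕ → ℝ}
    (hpos : ∀ k, 0 < h k) (hlim : Tendsto h atTop (𝓝 0))
    (hgap : ∀ k, HasGapsAtScale (x '' (n '' Iic k)) (h k))
    (htail : ∀ k, ∀ t ⊆ n '' Ioi k, ‖∑' i : t, w i‖ < h k / (k + 1))
    {ξ : ℝ} (hdisc : ∀ᶠ y in 𝓝[≠] ξ, y ∉ x '' (range n)ᶜ)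
    {d : E} (hd : HasDerivAt (jumpFunction w x) d ξ) : d = 0 := by
  choose t ht hdisj using fun k ↦ hgap k ξ
  have ht₀ : Tendsto t atTop (𝓝 0) := by
    rw [tendsto_zero_iff_abs_tendsto_zero]
    simpa only [comp_def, ht] using hlim
  have ht_ne (k : ℕ) : t k ≠ 0 := abs_pos.1 (ht k ▸ hpos k)
  have hnear : ∀ᶠ k in atTop, Disjoint (x '' (range n)ᶜ) (uIcc (ξ + t k / 2) (ξ + t k)) := by
    have hIcc : Tendsto (fun k ↦ uIcc (ξ + t k / 2) (ξ + t k)) atTop (𝓝 ξ).smallSets :=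
      Tendsto.uIcc (by simpa using (ht₀.div_const 2).const_add ξ) (by simpa using ht₀.const_add ξ)
    filter_upwards [tendsto_smallSets_iff.1 hIcc _ (eventually_nhdsWithin_iff.1 hdisc)] with k hk
    refine disjoint_right.2 fun y hy ↦ hk hy ?_
    rintro rfl
    exact notMem_uIcc_add_half (ht_ne k) hy
  have hsmall : ∀ᶠ k in atTop,
      ‖jumpFunction w x (ξ + t k) - jumpFunction w x (ξ + t k / 2)‖ < h k / (k + 1) := by
    filter_upwards [hnear] with k hk
    exact norm_jumpFunction_sub_lt hw fun s hs ↦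
      htail k s (hs.trans (preimage_subset_image_Ioi (hdisj k) hk))
  refine eq_zero_of_hasDerivAt_of_isLittleO_sub_half hd
    (tendsto_nhdsWithin_iff.2 ⟨ht₀, .of_forall ht_ne⟩) (isLittleO_iff.2 fun c hc ↦ ?_)
  filter_upwards [hsmall, tendsto_one_div_add_atTop_nhds_zero_nat.eventually_lt_const hc]
    with k hk hkc
  calc ‖jumpFunction w x (ξ + t k) - jumpFunction w x (ξ + t k / 2)‖
      ≤ 1 / (k + 1) * h k := by rw [one_div_mul_eq_div]; exact hk.le
    _ ≤ c * h k := by gcongr; exact (hpos k).le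
    _ = c * ‖t k‖ := by rw [Real.norm_eq_abs, ht]

theorem exists_equiv_forall_eq_zero_of_hasDerivAt_jumpFunction {α : Type*} [Countable ι]
    [Infinite ι] [Countable α] {ρ : α → ℝ} {Z : Set α} (hZ : Z.Infinite) (hZc : Zᶜ.Infinite)
    (hdisc : ∀ ξ, ∀ᶠ y in 𝓝[≠] ξ, y ∉ ρ '' Z) (hw : Summable w) :
    ∃ φ : ι ≃ α, ∀ ξ d, HasDerivAt (jumpFunction w (ρ ∘ φ)) d ξ → d = 0 := by
  have := hZc.to_subtype
  obtain ⟨e⟩ := nonempty_equiv_of_countable (α := ℕ) (β := ↥Zᶜ)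
  let r : ℕ → α := fun k ↦ e k
  have hr : Injective r := Subtype.val_injective.comp e.injective
  have hrange : (range r)ᶜ = Z := by
    rw [show r = Subtype.val ∘ e from rfl, e.surjective.range_comp, Subtype.range_coe, compl_compl]
  have hscale (k : ℕ) : ∃ h ∈ Ioo (0 : ℝ) (1 / (k + 1)), HasGapsAtScale (ρ '' (r '' Iic k)) h :=
    (Eventually.and (Ioo_mem_nhdsGT Nat.one_div_pos_of_nat) (eventually_hasGapsAtScale_of_finite
      (((finite_Iic k).image r).image ρ))).exists
  choose h hmem hgap using hscale
  have hlim : Tendsto h atTop (𝓝 0) :=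
    squeeze_zero (fun k ↦ (hmem k).1.le) (fun k ↦ (hmem k).2.le)
      tendsto_one_div_add_atTop_nhds_zero_nat
  obtain ⟨n, hn, hnc, htail⟩ := exists_injective_forall_norm_tsum_lt hw
    fun k ↦ div_pos (hmem k).1 k.cast_add_one_pos
  obtain ⟨φ, hφ⟩ := exists_equiv_comp_eq hn hr hnc (hrange ▸ hZ)
  refine ⟨φ, fun ξ d hd ↦ eq_zero_of_hasDerivAt_jumpFunction hw (fun k ↦ (hmem k).1) hlim
    (fun k ↦ ?_) htail ?_ hd⟩
  · rw [image_comp, ← image_comp φ, hφ]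
    exact hgap k
  · rw [image_comp, image_compl_eq φ.bijective, ← range_comp, hφ, hrange]
    exact hdisc ξ

end JumpFunction

lemma infinite_compl_range_intCast : (range ((↑) : ℤ → ℚ))ᶜ.Infinite := by
  have hhalf : (1 / 2 : ℚ) ∉ range ((↑) : ℤ → ℚ) := by
    rintro ⟨z, hz⟩
    simpa using congrArg Rat.den hz
  exact infinite_of_mem_nhds _ (Int.isClosedEmbedding_coe_rat.isClosed_range.compl_mem_nhds hhalf)

lemma eventually_nhdsNE_notMem_range_intCast (ξ : ℝ) :
    ∀ᶠ y in 𝓝[≠] ξ, y ∉ range ((↑) : ℤ → ℝ) :=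
  disjoint_principal_right.1 (isClosed_and_discrete_iff.1
    ⟨Int.isClosedEmbedding_coe_real.isClosed_range,
      Int.isClosedEmbedding_coe_real.isDiscrete_range⟩ ξ)

theorem stmt18_general {ι E : Type*} [Countable ι] [Infinite ι] [NormedAddCommGroup E]
    [NormedSpace ℝ E] [CompleteSpace E] {w : ι → E} (hw : Summable w) :
    ∃ φ : ι → ℚ, Bijective φ ∧
      ∀ ξ d, HasDerivAt (jumpFunction w fun i ↦ (φ i : ℝ)) d ξ → d = 0 := by
  obtain ⟨φ, hφ⟩ := exists_equiv_forall_eq_zero_of_hasDerivAt_jumpFunction (ρ := ((↑) : ℚ → ℝ))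
    (infinite_range_of_injective Int.cast_injective) infinite_compl_range_intCast
    (fun ξ ↦ by
      simpa [← range_comp, comp_def] using eventually_nhdsNE_notMem_range_intCast ξ) hw
  exact ⟨φ, φ.bijective, hφ⟩

theorem stmt18 :
    ∃ φ : ℕ+ → ℚ, Function.Bijective φ ∧
      ¬ ∃ (ξ d : ℝ), 0 < d ∧ HasDerivAt (Gphi φ) d ξ := by
  obtain ⟨φ, hφ, hzero⟩ := stmt18_general
    ((Real.summable_one_div_nat_pow.2 one_lt_two).comp_injective PNat.coe_injective)
  exact ⟨φ, hφ, fun ⟨ξ, d, hd, hder⟩ ↦ hd.ne' (hzero ξ d (Gphi_eq_jumpFunction φ ▸ hder))⟩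
end
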